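/- No computably enumerable prefix-free set of binary strings contains a Σ^0_1(∅') subset whose measure is a 2-random real. More generally, for every n ∈ ℕ and every Σ^0_{n+1} prefix-free set of binary strings, no Σ^0_{n+2} subset of this set has measure an (n+2)-random real. -/

import Mathlib

open scoped Classical
open MeasureTheory

namespace RandProb

/-- Cantor space: the space of infinite binary sequences. -/
abbrev Cantor := ℕ → Bool

/-! ### Oracle partial recursive functions, via codes -/

/-- Codes for partial recursive functions with access to an oracle `O : ℕ → ℕ`.
These codes play the role of (oracle) Turing machines. -/
inductive CodeO : Type
  | zero : CodeO
  | succ : CodeO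
  | left : CodeO
  | right : CodeO
  | oracle : CodeO
  | pair : CodeO → CodeO → CodeO
  | comp : CodeO → CodeO → CodeO
  | prec : CodeO → CodeO → CodeO
  | rfind' : CodeO → CodeO

/-- Evaluation of an oracle code with (total) oracle `O`. -/
def CodeO.eval (O : ℕ → ℕ) : CodeO → ℕ →. ℕ
  | .zero => pure 0
  | .succ => Nat.succ
  | .left => ↑fun n : ℕ => n.unpair.1
  | .right => ↑fun n : ℕ => n.unpair.2
  | .oracle => ↑fun n : ℕ => O n
  | .pair cf cg => fun n => Nat.pair <$> cf.eval O n <*> cg.eval O n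
  | .comp cf cg => fun n => cg.eval O n >>= cf.eval O
  | .prec cf cg =>
    Nat.unpaired fun a n =>
      n.rec (cf.eval O a) fun y IH => do
        let i ← IH
        cg.eval O (Nat.pair a (Nat.pair y i))
  | .rfind' cf =>
    Nat.unpaired fun a m =>
      (Nat.rfind fun n => (fun m => m = 0) <$> cf.eval O (Nat.pair a (n + m))).map (· + m)

/-- A canonical injective numbering of oracle codes. -/
def CodeO.encode : CodeO → ℕ
  | .zero => 0
  | .succ => 1
  | .left => 2
  | .right => 3
  | .oracle => 4
  | .pair cf cg => 2 * (2 * Nat.pair cf.encode cg.encode) + 5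
  | .comp cf cg => 2 * (2 * Nat.pair cf.encode cg.encode + 1) + 5
  | .prec cf cg => 2 * (2 * Nat.pair cf.encode cg.encode) + 6
  | .rfind' cf => 2 * (2 * cf.encode + 1) + 6

/-- The Turing jump of an oracle: the halting problem relative to `O`,
as a `{0,1}`-valued function. -/
noncomputable def jump (O : ℕ → ℕ) : ℕ → ℕ := fun e =>
  if ∃ c : CodeO, c.encode = e ∧ (c.eval O e).Dom then 1 else 0

/-- `iterJump n` is `∅^(n)`, the `n`-th iterate of the halting problem (as an oracle). -/
noncomputable def iterJump : ℕ → ℕ → ℕ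
  | 0 => fun _ => 0
  | n + 1 => jump (iterJump n)

/-- `S ⊆ ℕ` is computably enumerable relative to the oracle `O`. -/
def CeIn (O : ℕ → ℕ) (S : Set ℕ) : Prop := ∃ c : CodeO, S = {m | (c.eval O m).Dom}

/-- The left Dedekind cut of `α` (as a set of codes of rationals) is c.e. in `O`. -/
def LeftCeIn (O : ℕ → ℕ) (α : ℝ) : Prop :=
  CeIn O {m | ∃ q : ℚ, Encodable.encode q = m ∧ (q : ℝ) < α}

/-- The right Dedekind cut of `α` (as a set of codes of rationals) is c.e. in `O`. -/
def RightCeIn (O : ℕ → ℕ) (α : ℝ) : Prop :=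
  CeIn O {m | ∃ q : ℚ, Encodable.encode q = m ∧ α < (q : ℝ)}

/-! ### Martin-Löf randomness for real numbers -/

/-- The `i`-th component of a Martin-Löf test coded by the set `W ⊆ ℕ`:
the union of all open rational intervals whose codes are enumerated into the
`i`-th section of `W`. -/
def testSet (W : Set ℕ) (i : ℕ) : Set ℝ :=
  {x | ∃ p q : ℚ, Nat.pair i (Encodable.encode (p, q)) ∈ W ∧ (p : ℝ) < x ∧ x < (q : ℝ)}

/-- `α` is Martin-Löf random relative to the oracle `O`. -/
def MLRandomIn (O : ℕ → ℕ) (α : ℝ) : Prop :=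
  ∀ W : Set ℕ, CeIn O W →
    (∀ i, volume (testSet W i) ≤ ENNReal.ofReal ((2 : ℝ)⁻¹ ^ i)) →
    ∃ i, α ∉ testSet W i

/-- `α` is `n`-random: Martin-Löf random relative to `∅^(n-1)`. -/
def NRandom (n : ℕ) (α : ℝ) : Prop := MLRandomIn (iterJump (n - 1)) α

/-! ### The uniform measure on Cantor space -/

/-- The binary digits of a real number (meaningful on `[0,1)`). -/
noncomputable def digits (x : ℝ) : Cantor := fun n => decide (⌊x * 2 ^ (n + 1)⌋ % 2 = 1)

/-- The uniform (Lebesgue) product measure on Cantor space, obtained as the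
pushforward of Lebesgue measure on `[0,1)` under the binary-digit map. -/
noncomputable def mu : Measure Cantor :=
  Measure.map digits (volume.restrict (Set.Ico (0 : ℝ) 1))

/-- The uniform measure of a set of elements of Cantor space, as a real number. -/
noncomputable def muR (S : Set Cantor) : ℝ := (mu S).toReal

/-! ### Strings, prefixes and cylinders -/

/-- The length-`n` initial segment of `X ∈ 2^ω`, as a finite binary string. -/
def initSeg (X : Cantor) (n : ℕ) : List Bool := (List.range n).map X

/-- `⟦S⟧`: the elements of Cantor space having a prefix in the set of strings `S`. -/
def cyl (S : Set (List Bool)) : Set Cantor := {X | ∃ n, initSeg X n ∈ S}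

/-- A set of strings is prefix-free if none of its elements properly extends another. -/
def IsPrefixFree (S : Set (List Bool)) : Prop := ∀ σ ∈ S, ∀ τ ∈ S, σ <+: τ → σ = τ

/-- A set of strings is upward closed if it is closed under taking extensions. -/
def UpClosed (S : Set (List Bool)) : Prop := ∀ σ ∈ S, ∀ τ, σ <+: τ → τ ∈ S

/-- Two strings are compatible if one is a prefix of the other. -/
def Compatible (σ τ : List Bool) : Prop := σ <+: τ ∨ τ <+: σ

/-! ### Oracle machines -/

/-- An element of Cantor space viewed as a `{0,1}`-valued oracle. -/
def oX (X : Cantor) : ℕ → ℕ := fun n => cond (X n) 1 0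

/-- `evalO X c n`: the (possibly divergent) output of the oracle machine `c`
on input `n` with oracle `X`. -/
def evalO (X : Cantor) (c : CodeO) (n : ℕ) : Part ℕ := c.eval (oX X) n

/-- The oracle obtained by writing the string `ρ` before the bits of `X`. -/
def prepend (ρ : List Bool) (X : Cantor) : Cantor := fun n =>
  if n < ρ.length then ρ.getD n false else X (n - ρ.length)

/-- `X ∈ 2^ω` extends the finite string `ρ`. -/
def Extends (X : Cantor) (ρ : List Bool) : Prop := initSeg X ρ.length = ρ

/-- `u` is a universal oracle machine: some effective, prefix-free translation
`c ↦ σ_c` satisfies `u(σ_c * X, n) ≃ c(X, n)` for all machines `c`. -/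
def UniversalOM (u : CodeO) : Prop :=
  ∃ σ : CodeO → List Bool,
    (∃ f : ℕ → ℕ, Computable f ∧ ∀ c : CodeO, f c.encode = Encodable.encode (σ c)) ∧
    IsPrefixFree (Set.range σ) ∧
    ∀ (c : CodeO) (X : Cantor) (n : ℕ), evalO (prepend (σ c) X) u n = evalO X c n

/-- `TOT(c)`: the oracles `X` such that the function `c(X)` is total. -/
def TOT (c : CodeO) : Set Cantor := {X | ∀ n, (evalO X c n).Dom}

/-- The domain of the partial function `c(X)`. -/
def domSet (c : CodeO) (X : Cantor) : Set ℕ := {n | (evalO X c n).Dom}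

/-- The range of the partial function `c(X)`. -/
def ranSet (c : CodeO) (X : Cantor) : Set ℕ := {v | ∃ n, v ∈ evalO X c n}

/-- `INF(c)`: the oracles `X` such that `c(X)` has infinite domain. -/
def INF (c : CodeO) : Set Cantor := {X | (domSet c X).Infinite}

/-- `COF(c)`: the oracles `X` such that `c(X)` has cofinite domain. -/
def COF (c : CodeO) : Set Cantor := {X | (domSet c X)ᶜ.Finite}

/-- `COM(c)`: the oracles `X` such that `c(X)` has computable domain. -/
def COM (c : CodeO) : Set Cantor := {X | ComputablePred fun n => n ∈ domSet c X}

/-- The characteristic function of a set of naturals. -/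
noncomputable def chi (A : Set ℕ) : ℕ → ℕ := fun n => if n ∈ A then 1 else 0

/-- Turing reducibility between sets of naturals. -/
def TuringLEs (B A : Set ℕ) : Prop := ∃ c : CodeO, ∀ n, c.eval (chi A) n = Part.some (chi B n)

/-- The halting problem `∅'` as a set of naturals. -/
noncomputable def HaltingSet : Set ℕ := {e | iterJump 1 e = 1}

/-- `COMPL(c)`: the oracles `X` such that the domain of `c(X)` computes the halting problem. -/
noncomputable def COMPL (c : CodeO) : Set Cantor := {X | TuringLEs HaltingSet (domSet c X)}

/-- Turing reducibility between total functions on ℕ. -/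
def TuringLEf (f g : ℕ → ℕ) : Prop := ∃ c : CodeO, ∀ n, c.eval g n = Part.some (f n)

/-- A real number viewed as an oracle, via its binary expansion. -/
noncomputable def realOracle (α : ℝ) : ℕ → ℕ := oX (digits α)

/-- Two reals have Turing-incomparable degrees. -/
noncomputable def TIncompReal (α β : ℝ) : Prop :=
  ¬ TuringLEf (realOracle α) (realOracle β) ∧ ¬ TuringLEf (realOracle β) (realOracle α)

/-! ### Arithmetical hierarchy -/

/-- Evaluation with the trivial (empty) oracle: ordinary partial recursion. -/
def eval0 (c : CodeO) : ℕ →. ℕ := c.eval fun _ => 0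

/-- `SigmaNumIdx n c` is the `Σ^0_{n+1}` subset of `ℕ` with index `c`. -/
def SigmaNumIdx : ℕ → CodeO → Set ℕ
  | 0, c => {m | (eval0 c m).Dom}
  | n + 1, c => {m | ∃ k, Nat.pair m k ∉ SigmaNumIdx n c}

/-- `S ⊆ ℕ` is `Σ^0_n` (intended for `n ≥ 1`). -/
def SigmaN (n : ℕ) (S : Set ℕ) : Prop := ∃ c : CodeO, S = SigmaNumIdx (n - 1) c

/-- The set of codes of the elements of a set of binary strings. -/
def strCodes (S : Set (List Bool)) : Set ℕ := {m | ∃ σ ∈ S, Encodable.encode σ = m}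

/-- A set of binary strings is `Σ^0_n`. -/
def SigmaStr (n : ℕ) (S : Set (List Bool)) : Prop := SigmaN n (strCodes S)

/-- A set of binary strings is `Π^0_n`: its complement is `Σ^0_n`. -/
def PiStr (n : ℕ) (S : Set (List Bool)) : Prop := SigmaStr n Sᶜ

/-- A set of binary strings is c.e. relative to the oracle `O`. -/
def CeStrIn (O : ℕ → ℕ) (S : Set (List Bool)) : Prop := CeIn O (strCodes S)

/-- `SigmaClassIdx n c m` is the `Σ^0_{n+1}` class of elements of Cantor space
with index `c` and parameter `m`. -/
def SigmaClassIdx : ℕ → CodeO → ℕ → Set Cantor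
  | 0, c, m => {X | (evalO X c m).Dom}
  | n + 1, c, m => {X | ∃ k, X ∉ SigmaClassIdx n c (Nat.pair m k)}

/-! ### Monotone machines -/

/-- A monotone machine: a partial computable, monotone map on finite binary strings. -/
structure MonoMachine where
  f : List Bool →. List Bool
  partrec : Partrec f
  mono : ∀ ⦃σ τ a b : List Bool⦄, σ <+: τ → a ∈ f σ → b ∈ f τ → a <+: b

/-- The oracles `X` such that the output of the monotone machine on `X` is infinite. -/
def MonoINF (M : MonoMachine) : Set Cantor :=
  {X | ∀ k, ∃ n a, a ∈ M.f (initSeg X n) ∧ k ≤ a.length}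

/-- The `k`-th bit of the output `M(X)` of a monotone machine is `b`. -/
def MonoMachine.hasBit (M : MonoMachine) (X : Cantor) (k : ℕ) (b : Bool) : Prop :=
  ∃ n a, a ∈ M.f (initSeg X n) ∧ a[k]? = some b

/-- `U` is a universal monotone machine. -/
def UniversalMono (U : MonoMachine) : Prop :=
  ∃ (M : ℕ → MonoMachine) (σ : ℕ → List Bool),
    Partrec₂ (fun (e : ℕ) (τ : List Bool) => (M e).f τ) ∧
    (∀ V : MonoMachine, ∃ e, (M e).f = V.f) ∧
    Computable σ ∧ IsPrefixFree (Set.range σ) ∧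
    ∀ e τ, U.f (σ e ++ τ) = (M e).f τ

/-! ### Infinitary self-delimiting machines -/

/-- Chaitin's infinitary self-delimiting machines: `f σ n` is the `n`-th approximation
of the output on program `σ` (`none` meaning divergence); the convergence relation is
decidable, approximations are monotone, and machines are self-delimiting. -/
structure InfMachine where
  f : List Bool → ℕ → Option (List Bool)
  computable : Computable₂ f
  mono : ∀ σ m n a, n < m → f σ m = some a → ∃ b, f σ n = some b ∧ b <+: a
  sd : ∀ σ τ n a, f σ n = some a → f (σ ++ τ) n = some a

/-- `M^∞(σ)↓`: all approximations converge. -/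
def InfMachine.domInf (M : InfMachine) (σ : List Bool) : Prop := ∀ n, M.f σ n ≠ none

/-- The domain of `M^∞`. -/
def InfMachine.DOM (M : InfMachine) : Set (List Bool) := {σ | M.domInf σ}

/-- The output `M^∞(σ)` is infinite (a stream). -/
def InfMachine.outInf (M : InfMachine) (σ : List Bool) : Prop :=
  ∀ k, ∃ n a, M.f σ n = some a ∧ k ≤ a.length

/-- `FIN(M^∞)`: programs in the domain with finite output. -/
def InfMachine.FIN (M : InfMachine) : Set (List Bool) := {σ | M.domInf σ ∧ ¬ M.outInf σ}

/-- `INF(M^∞)`: programs in the domain with infinite output. -/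
def InfMachine.INF (M : InfMachine) : Set (List Bool) := {σ | M.domInf σ ∧ M.outInf σ}

/-- The `k`-th bit of the output `M^∞(σ)` is `b`. -/
def InfMachine.hasBit (M : InfMachine) (σ : List Bool) (k : ℕ) (b : Bool) : Prop :=
  ∃ n a, M.f σ n = some a ∧ a[k]? = some b

/-- The domain of the prefix-free machine `M^*`: minimal strings in the domain of `M^∞`. -/
def InfMachine.DOMstar (M : InfMachine) : Set (List Bool) :=
  {σ | M.domInf σ ∧ ∀ τ, τ <+: σ → τ ≠ σ → ¬ M.domInf τ}

/-- Programs whose output is a stream with a tail of 1s. -/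
def InfMachine.COFout (M : InfMachine) : Set (List Bool) :=
  {σ | M.domInf σ ∧ M.outInf σ ∧ ∃ t, ∀ k, t ≤ k → M.hasBit σ k true}

/-- `A^∞(σ) ≃ B^∞(τ)`: both converge or both diverge, with equal outputs. -/
def InfAgree (A : InfMachine) (σ : List Bool) (B : InfMachine) (τ : List Bool) : Prop :=
  (A.domInf σ ↔ B.domInf τ) ∧ (A.domInf σ → ∀ k b, (A.hasBit σ k b ↔ B.hasBit τ k b))

/-- `U` is a universal infinitary self-delimiting machine. -/
def UniversalInf (U : InfMachine) : Prop :=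
  ∃ (M : ℕ → InfMachine) (σ : ℕ → List Bool),
    Computable (fun p : ℕ × List Bool × ℕ => (M p.1).f p.2.1 p.2.2) ∧
    (∀ V : InfMachine, ∃ e, ∀ τ, InfAgree (M e) τ V τ) ∧
    Computable σ ∧ IsPrefixFree (Set.range σ) ∧
    ∀ e τ, InfAgree U (σ e ++ τ) (M e) τ

end RandProb

/-!
Let `S` be prefix-free and c.e. in `O`, and let `V ⊆ S` be c.e. in the jump of `O`. The mass of `S`
beyond `m` tends to `0`, and the jump of `O` recognises the `m` for which it is small. Enumerate
`V` relative to the jump, and let `a s` be the mass enumerated by stage `s`. Between two stages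
`s ≤ t` with the same elements below `m`, the mass can only grow by elements of `S` beyond `m`.
Hence the intervals `(a s - ε s, a t + ε s)` over all such pairs of stages cover a set of small
measure, however often the part below `m` changes. It eventually stops changing, so one of these
intervals contains the measure of `V`, which is therefore captured by a Martin-Löf test relative to
the jump of `O`.
-/

namespace RandProb

open Filter Topology

/-- The initial segment `O 0, …, O (l - 1)` of an oracle. -/
def seg (O : ℕ → ℕ) (l : ℕ) : List ℕ := (List.range l).map O

@[simp]
theorem length_seg (O : ℕ → ℕ) (l : ℕ) : (seg O l).length = l := by simp [seg]

theorem take_seg (O : ℕ → ℕ) {s t : ℕ} (h : s ≤ t) : (seg O t).take s = seg O s := by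
  simp [seg, ← List.map_take, List.take_range, h]

theorem seg_succ (O : ℕ → ℕ) (l : ℕ) : seg O (l + 1) = seg O l ++ [O l] := by
  simp [seg, List.range_succ]

/-- A predicate is `Σ⁰₁` relative to `O`. A positive answer consults only finitely much of the
oracle, so the existential quantifier may range over initial segments of `O`. -/
def REPredIn {α : Type*} [Primcodable α] (O : ℕ → ℕ) (p : α → Prop) : Prop :=
  ∃ d : α × List ℕ → Prop, PrimrecPred d ∧ ∀ a, p a ↔ ∃ l, d (a, seg O l)

namespace REPredIn

variable {α β : Type*} [Primcodable α] [Primcodable β] {O : ℕ → ℕ} {p q : α → Prop}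

theorem of_primrecPred (hp : PrimrecPred p) : REPredIn O p :=
  ⟨fun x => p x.1, hp.comp Primrec.fst, fun _ => (exists_const ℕ).symm⟩

theorem of_iff (hp : REPredIn O p) (h : ∀ a, q a ↔ p a) : REPredIn O q := by
  rwa [funext fun a => propext (h a)]

theorem exists_monotone (hp : REPredIn O p) :
    ∃ d : α × List ℕ → Prop, PrimrecPred d ∧ (∀ a, Monotone fun l => d (a, seg O l)) ∧
      ∀ a, p a ↔ ∃ l, d (a, seg O l) := by
  obtain ⟨d, hd, hpd⟩ := hp
  have htake : PrimrecRel fun (i : ℕ) (x : α × List ℕ) => d (x.1, x.2.take i) :=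
    hd.comp (Primrec.pair (Primrec.fst.comp Primrec.snd)
      (Primrec.list_take.comp Primrec.fst (Primrec.snd.comp Primrec.snd)))
  have hd' : PrimrecPred fun x : α × List ℕ =>
      ∃ i ∈ List.range (x.2.length + 1), d (x.1, x.2.take i) :=
    htake.exists_mem_list.comp
      (Primrec.list_range.comp (Primrec.succ.comp (Primrec.list_length.comp Primrec.snd)))
      Primrec.id
  have hiff (a : α) (l : ℕ) :
      (∃ i ∈ List.range ((seg O l).length + 1), d (a, (seg O l).take i)) ↔
        ∃ i ≤ l, d (a, seg O i) := by
    simp only [length_seg, List.mem_range, Nat.lt_succ_iff]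
    exact exists_congr fun i => and_congr_right fun hi => by rw [take_seg O hi]
  refine ⟨_, hd', fun a l m hlm => ?_, fun a => ?_⟩
  · simp only [hiff]
    exact fun ⟨i, hi, h⟩ => ⟨i, hi.trans hlm, h⟩
  · simp only [hiff, hpd]
    exact ⟨fun ⟨l, h⟩ => ⟨l, l, le_rfl, h⟩, fun ⟨_, i, _, h⟩ => ⟨i, h⟩⟩

theorem comp {r : β → Prop} (hr : REPredIn O r) {f : α → β} (hf : Primrec f) :
    REPredIn O fun a => r (f a) := by
  obtain ⟨d, hd, hrd⟩ := hr
  exact ⟨fun x => d (f x.1, x.2), hd.comp ((hf.comp Primrec.fst).pair Primrec.snd),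
    fun a => hrd (f a)⟩

theorem and (hp : REPredIn O p) (hq : REPredIn O q) : REPredIn O fun a => p a ∧ q a := by
  obtain ⟨d, hd, hdm, hpd⟩ := hp.exists_monotone
  obtain ⟨e, he, hem, hqe⟩ := hq.exists_monotone
  refine ⟨fun x => d x ∧ e x, hd.and he, fun a => ?_⟩
  simp only [hpd, hqe]
  exact ⟨fun ⟨⟨l, hl⟩, m, hm⟩ => ⟨max l m, hdm a (le_max_left l m) hl, hem a (le_max_right l m) hm⟩,
    fun ⟨l, hl, hl'⟩ => ⟨⟨l, hl⟩, l, hl'⟩⟩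

theorem exists_snd {r : α → β → Prop} (hr : REPredIn O fun x : α × β => r x.1 x.2) :
    REPredIn O fun a => ∃ b, r a b := by
  obtain ⟨d, hd, hdm, hrd⟩ := hr.exists_monotone
  have hswap : PrimrecRel fun (b : β) (x : α × List ℕ) => d ((x.1, b), x.2) :=
    hd.comp (((Primrec.fst.comp Primrec.snd).pair Primrec.fst).pair
      (Primrec.snd.comp Primrec.snd))
  have hlist : Primrec fun x : α × List ℕ =>
      (List.range x.2.length).filterMap (Encodable.decode (α := β)) :=
    Primrec.listFilterMap (Primrec.list_range.comp (Primrec.list_length.comp Primrec.snd))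
      (Primrec.decode.comp Primrec.snd).to₂
  refine ⟨_, hswap.exists_mem_list.comp hlist Primrec.id, fun a => ⟨?_, ?_⟩⟩
  · rintro ⟨b, hb⟩
    obtain ⟨l, hl⟩ := (hrd (a, b)).1 hb
    refine ⟨max l (Encodable.encode b + 1), b, ?_, hdm (a, b) (le_max_left _ _) hl⟩
    simp only [length_seg, List.mem_filterMap, List.mem_range]
    exact ⟨Encodable.encode b, by simp, Encodable.encodek b⟩
  · rintro ⟨l, b, -, hb⟩
    exact ⟨b, (hrd (a, b)).2 ⟨l, hb⟩⟩

theorem forall_lt {r : α → ℕ → Prop} (hr : REPredIn O fun x : α × ℕ => r x.1 x.2) {f : α → ℕ}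
    (hf : Primrec f) : REPredIn O fun a => ∀ k < f a, r a k := by
  obtain ⟨d, hd, hdm, hrd⟩ := hr.exists_monotone
  have hswap : PrimrecRel fun (k : ℕ) (x : α × List ℕ) => d ((x.1, k), x.2) :=
    hd.comp (((Primrec.fst.comp Primrec.snd).pair Primrec.fst).pair
      (Primrec.snd.comp Primrec.snd))
  refine ⟨_, hswap.forall_mem_list.comp (Primrec.list_range.comp (hf.comp Primrec.fst)) Primrec.id,
    fun a => ⟨fun h => ?_, ?_⟩⟩
  · choose! l hl using fun k hk => (hrd (a, k)).1 (h k hk)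
    exact ⟨(Finset.range (f a)).sup l, fun k hk => hdm (a, k)
      (Finset.le_sup (Finset.mem_range.2 (List.mem_range.1 hk))) (hl k (List.mem_range.1 hk))⟩
  · rintro ⟨l, hl⟩ k hk
    exact (hrd (a, k)).2 ⟨l, hl k (List.mem_range.2 hk)⟩

theorem eq_seg (O : ℕ → ℕ) : REPredIn O fun L : List ℕ => L = seg O L.length := by
  refine ⟨fun x => x.1 = x.2.take x.1.length,
    Primrec.eq.comp Primrec.fst (Primrec.list_take.comp (Primrec.list_length.comp Primrec.fst)
      Primrec.snd), fun L => ⟨fun h => ⟨L.length, by simp [← h]⟩, fun ⟨l, h⟩ => ?_⟩⟩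
  have hlen : L.length ≤ l := by simpa using (congrArg List.length h).le
  exact h.trans (take_seg O hlen)

theorem exists_seg {r : α → List ℕ → Prop} (hr : REPredIn O fun x : α × List ℕ => r x.1 x.2) :
    REPredIn O fun a => ∃ l, r a (seg O l) :=
  (exists_snd (r := fun a L => L = seg O L.length ∧ r a L)
    (((eq_seg O).comp Primrec.snd).and hr)).of_iff fun _ =>
    ⟨fun ⟨l, h⟩ => ⟨seg O l, by simp, h⟩, fun ⟨L, hL, h⟩ => ⟨L.length, hL ▸ h⟩⟩

theorem oracle_graph (O : ℕ → ℕ) : REPredIn O fun x : ℕ × ℕ => x.2 = O x.1 := by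
  have hget : PrimrecPred fun x : (ℕ × ℕ) × List ℕ => x.2[x.1.1]? = some x.1.2 :=
    Primrec.eq.comp (Primrec.list_getElem?.comp Primrec.snd (Primrec.fst.comp Primrec.fst))
      (Primrec.option_some.comp (Primrec.snd.comp Primrec.fst))
  refine (exists_seg (r := fun x L => L[x.1]? = some x.2) (of_primrecPred hget)).of_iff
    fun x => ⟨fun h => ⟨x.1 + 1, by simp [seg, h]⟩, ?_⟩
  rintro ⟨l, h⟩
  obtain ⟨-, hx⟩ : x.1 < l ∧ O x.1 = x.2 := by simpa [seg, List.getElem?_eq_some_iff] using h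
  exact hx.symm

end REPredIn

theorem getD_seg (v : ℕ → ℕ) {i l : ℕ} (h : i < l) : (seg v l).getD i 0 = v i := by
  simp [seg, List.getD, h]

namespace CodeO

variable {O : ℕ → ℕ} {cf cg : CodeO} {n y : ℕ}

theorem mem_eval_pair :
    y ∈ (pair cf cg).eval O n ↔ y.unpair.1 ∈ cf.eval O n ∧ y.unpair.2 ∈ cg.eval O n := by
  simp only [eval, Seq.seq, Part.map_eq_map, Part.mem_bind_iff, Part.mem_map_iff]
  constructor
  · rintro ⟨_, ⟨a, ha, rfl⟩, b, hb, rfl⟩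
    simpa using ⟨ha, hb⟩
  · exact fun ⟨ha, hb⟩ => ⟨_, ⟨_, ha, rfl⟩, _, hb, Nat.pair_unpair y⟩

theorem mem_eval_comp : y ∈ (comp cf cg).eval O n ↔ ∃ a ∈ cg.eval O n, y ∈ cf.eval O a :=
  Part.mem_bind_iff

theorem eval_prec_zero (O : ℕ → ℕ) (cf cg : CodeO) (a : ℕ) :
    (prec cf cg).eval O (Nat.pair a 0) = cf.eval O a := by
  simp [eval]

theorem eval_prec_succ (O : ℕ → ℕ) (cf cg : CodeO) (a k : ℕ) :
    (prec cf cg).eval O (Nat.pair a (k + 1)) =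
      ((prec cf cg).eval O (Nat.pair a k)).bind fun i =>
        cg.eval O (Nat.pair a (Nat.pair k i)) := by
  simp [eval]

theorem mem_eval_prec {a k : ℕ} :
    y ∈ (prec cf cg).eval O (Nat.pair a k) ↔
      ∃ v : ℕ → ℕ, v 0 ∈ cf.eval O a ∧
        (∀ i < k, v (i + 1) ∈ cg.eval O (Nat.pair a (Nat.pair i (v i)))) ∧ v k = y := by
  induction k generalizing y with
  | zero =>
    rw [eval_prec_zero]
    exact ⟨fun h => ⟨fun _ => y, h, by simp, rfl⟩, by rintro ⟨v, h, -, rfl⟩; exact h⟩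
  | succ k ih =>
    simp only [eval_prec_succ, Part.mem_bind_iff, ih]
    constructor
    · rintro ⟨_, ⟨v, h0, hs, rfl⟩, hy⟩
      refine ⟨Function.update v (k + 1) y, by simpa using h0, fun i hi => ?_, by simp⟩
      rw [Function.update_of_ne hi.ne]
      rcases Nat.lt_succ_iff_lt_or_eq.1 hi with hi | rfl
      · rw [Function.update_of_ne (by omega)]
        exact hs i hi
      · simpa using hy
    · rintro ⟨v, h0, hs, rfl⟩
      exact ⟨v k, ⟨v, h0, fun i hi => hs i (by omega), rfl⟩, hs k (Nat.lt_succ_self k)⟩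

theorem mem_eval_rfind' :
    y ∈ (rfind' cf).eval O n ↔
      ∃ k, (0 ∈ cf.eval O (Nat.pair n.unpair.1 (k + n.unpair.2)) ∧
        ∀ j < k, ∃ b ∈ cf.eval O (Nat.pair n.unpair.1 (j + n.unpair.2)), b ≠ 0) ∧
          k + n.unpair.2 = y := by
  refine (Part.mem_map_iff _).trans (exists_congr fun k => and_congr_left fun _ => ?_)
  refine (Nat.mem_rfind (p := fun k =>
    (cf.eval O (Nat.pair n.unpair.1 (k + n.unpair.2))).map fun m => decide (m = 0))).trans ?_
  simp [Part.mem_map_iff]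

end CodeO

namespace REPredIn

open CodeO

variable {O : ℕ → ℕ} {cf cg : CodeO}

theorem eval_prec_graph (hf : REPredIn O fun x : ℕ × ℕ => x.2 ∈ cf.eval O x.1)
    (hg : REPredIn O fun x : ℕ × ℕ => x.2 ∈ cg.eval O x.1) :
    REPredIn O fun x : ℕ × ℕ => x.2 ∈ (prec cf cg).eval O x.1 := by
  have harg : Primrec fun z : (ℕ × ℕ) × List ℕ => z.1.1.unpair :=
    Primrec.unpair.comp (Primrec.fst.comp Primrec.fst)
  have hget {f : ((ℕ × ℕ) × List ℕ) × ℕ → ℕ} (hf : Primrec f) :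
      Primrec fun w : ((ℕ × ℕ) × List ℕ) × ℕ => w.1.2.getD (f w) 0 :=
    (Primrec.list_getD 0).comp (Primrec.snd.comp Primrec.fst) hf
  have hzero : REPredIn O fun z : (ℕ × ℕ) × List ℕ => z.2.getD 0 0 ∈ cf.eval O z.1.1.unpair.1 :=
    hf.comp ((Primrec.fst.comp harg).pair
      ((Primrec.list_getD 0).comp Primrec.snd (Primrec.const 0)))
  have hstep : REPredIn O fun w : ((ℕ × ℕ) × List ℕ) × ℕ => w.1.2.getD (w.2 + 1) 0 ∈
      cg.eval O (Nat.pair w.1.1.1.unpair.1 (Nat.pair w.2 (w.1.2.getD w.2 0))) :=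
    hg.comp (Primrec.pair
      (Primrec₂.natPair.comp (Primrec.fst.comp (harg.comp Primrec.fst))
        (Primrec₂.natPair.comp Primrec.snd (hget Primrec.snd)))
      (hget (Primrec.succ.comp Primrec.snd)))
  have hlast : PrimrecPred fun z : (ℕ × ℕ) × List ℕ => z.2.getD z.1.1.unpair.2 0 = z.1.2 :=
    Primrec.eq.comp ((Primrec.list_getD 0).comp Primrec.snd (Primrec.snd.comp harg))
      (Primrec.snd.comp Primrec.fst)
  refine ((hzero.and ((forall_lt hstep (Primrec.snd.comp harg)).and
    (of_primrecPred hlast))).exists_snd (r := fun x (v : List ℕ) =>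
      v.getD 0 0 ∈ cf.eval O x.1.unpair.1 ∧
      (∀ i < x.1.unpair.2, v.getD (i + 1) 0 ∈
        cg.eval O (Nat.pair x.1.unpair.1 (Nat.pair i (v.getD i 0)))) ∧
      v.getD x.1.unpair.2 0 = x.2)).of_iff fun x => ?_
  rw [← Nat.pair_unpair x.1, mem_eval_prec, Nat.pair_unpair]
  constructor
  · rintro ⟨v, h0, hs, hk⟩
    refine ⟨seg v (x.1.unpair.2 + 1), ?_, fun i hi => ?_, ?_⟩
    · rwa [getD_seg v (by omega)]
    · rw [getD_seg v (by omega), getD_seg v (by omega)]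
      exact hs i hi
    · rwa [getD_seg v (by omega)]
  · exact fun ⟨v, hv⟩ => ⟨fun i => v.getD i 0, hv⟩

theorem eval_rfind'_graph (hf : REPredIn O fun x : ℕ × ℕ => x.2 ∈ cf.eval O x.1) :
    REPredIn O fun x : ℕ × ℕ => x.2 ∈ (rfind' cf).eval O x.1 := by
  have harg : Primrec fun z : (ℕ × ℕ) × ℕ => Nat.pair z.1.1.unpair.1 (z.2 + z.1.1.unpair.2) :=
    have hn : Primrec fun z : (ℕ × ℕ) × ℕ => z.1.1.unpair :=
      Primrec.unpair.comp (Primrec.fst.comp Primrec.fst)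
    Primrec₂.natPair.comp (Primrec.fst.comp hn)
      (Primrec.nat_add.comp Primrec.snd (Primrec.snd.comp hn))
  have hzero : REPredIn O fun z : (ℕ × ℕ) × ℕ =>
      0 ∈ cf.eval O (Nat.pair z.1.1.unpair.1 (z.2 + z.1.1.unpair.2)) :=
    hf.comp (harg.pair (Primrec.const 0))
  have hpos : REPredIn O fun z : (ℕ × ℕ) × ℕ =>
      ∃ b, b ∈ cf.eval O (Nat.pair z.1.1.unpair.1 (z.2 + z.1.1.unpair.2)) ∧ b ≠ 0 :=
    ((hf.comp ((harg.comp Primrec.fst).pair Primrec.snd)).and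
      (of_primrecPred (Primrec.eq.comp Primrec.snd (Primrec.const 0)).not)).exists_snd
  have hall : REPredIn O fun z : (ℕ × ℕ) × ℕ => ∀ j < z.2,
      ∃ b, b ∈ cf.eval O (Nat.pair z.1.1.unpair.1 (j + z.1.1.unpair.2)) ∧ b ≠ 0 :=
    forall_lt (hpos.comp ((Primrec.fst.comp Primrec.fst).pair Primrec.snd)) Primrec.snd
  have hout : PrimrecPred fun z : (ℕ × ℕ) × ℕ => z.2 + z.1.1.unpair.2 = z.1.2 :=
    Primrec.eq.comp (Primrec.nat_add.comp Primrec.snd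
      (Primrec.snd.comp (Primrec.unpair.comp (Primrec.fst.comp Primrec.fst))))
      (Primrec.snd.comp Primrec.fst)
  exact (((hzero.and hall).and (of_primrecPred hout)).exists_snd).of_iff fun x => mem_eval_rfind'

theorem eval_graph (O : ℕ → ℕ) (c : CodeO) :
    REPredIn O fun x : ℕ × ℕ => x.2 ∈ c.eval O x.1 := by
  induction c with
  | zero =>
    exact of_primrecPred ((Primrec.eq.comp Primrec.snd (Primrec.const 0)).of_eq fun x => by
      simp [eval, pure, PFun.pure])
  | succ =>
    exact of_primrecPred ((Primrec.eq.comp Primrec.snd (Primrec.succ.comp Primrec.fst)).of_eq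
      fun x => by simp [eval])
  | left =>
    exact of_primrecPred ((Primrec.eq.comp Primrec.snd
      (Primrec.fst.comp (Primrec.unpair.comp Primrec.fst))).of_eq fun x => by simp [eval])
  | right =>
    exact of_primrecPred ((Primrec.eq.comp Primrec.snd
      (Primrec.snd.comp (Primrec.unpair.comp Primrec.fst))).of_eq fun x => by simp [eval])
  | oracle => exact (oracle_graph O).of_iff fun x => by simp [eval]
  | pair cf cg hf hg =>
    have hout : Primrec fun x : ℕ × ℕ => x.2.unpair := Primrec.unpair.comp Primrec.snd
    exact ((hf.comp (Primrec.fst.pair (Primrec.fst.comp hout))).and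
      (hg.comp (Primrec.fst.pair (Primrec.snd.comp hout)))).of_iff fun x => mem_eval_pair
  | comp cf cg hf hg =>
    have h : REPredIn O fun z : (ℕ × ℕ) × ℕ => z.2 ∈ cg.eval O z.1.1 ∧ z.1.2 ∈ cf.eval O z.2 :=
      (hg.comp ((Primrec.fst.comp Primrec.fst).pair Primrec.snd)).and
        (hf.comp (Primrec.snd.pair (Primrec.snd.comp Primrec.fst)))
    exact (h.exists_snd (r := fun x a => a ∈ cg.eval O x.1 ∧ x.2 ∈ cf.eval O a)).of_iff
      fun x => mem_eval_comp
  | prec cf cg hf hg => exact eval_prec_graph hf hg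
  | rfind' cf hf => exact eval_rfind'_graph hf

end REPredIn

namespace CodeO

variable {O : ℕ → ℕ} {cf cg : CodeO} {n a b : ℕ}

theorem eval_comp_of_eq_some (h : cg.eval O n = Part.some a) :
    (comp cf cg).eval O n = cf.eval O a :=
  (congrArg (Part.bind · (cf.eval O)) h).trans (Part.bind_some a _)

theorem eval_pair_of_eq_some (hf : cf.eval O n = Part.some a) (hg : cg.eval O n = Part.some b) :
    (pair cf cg).eval O n = Part.some (Nat.pair a b) := by
  simp [eval, hf, hg, Seq.seq]

theorem encode_injective : Function.Injective encode := by
  intro c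
  induction c with
  | zero | succ | left | right | oracle => intro d; cases d <;> simp [encode]
  | pair cf cg hf hg | comp cf cg hf hg | prec cf cg hf hg =>
    intro d
    cases d <;> simp only [encode] <;> intro h <;> try omega
    simp only [Nat.add_right_cancel_iff, Nat.mul_left_cancel_iff two_pos, Nat.pair_eq_pair] at h
    rw [hf h.1, hg h.2]
  | rfind' cf hf =>
    intro d
    cases d <;> simp only [encode] <;> intro h <;> try omega
    simp only [Nat.add_right_cancel_iff, Nat.mul_left_cancel_iff two_pos] at h
    rw [hf h]

end CodeO

namespace TuringLEf

open CodeO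

variable {O f g : ℕ → ℕ}

theorem oracle (O : ℕ → ℕ) : TuringLEf O O := ⟨.oracle, fun _ => rfl⟩

theorem pair (hf : TuringLEf f O) (hg : TuringLEf g O) :
    TuringLEf (fun n => Nat.pair (f n) (g n)) O := by
  obtain ⟨c, hc⟩ := hf
  obtain ⟨d, hd⟩ := hg
  exact ⟨.pair c d, fun n => eval_pair_of_eq_some (hc n) (hd n)⟩

theorem comp (hf : TuringLEf f O) (hg : TuringLEf g O) : TuringLEf (fun n => f (g n)) O := by
  obtain ⟨c, hc⟩ := hf
  obtain ⟨d, hd⟩ := hg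
  exact ⟨.comp c d, fun n => (eval_comp_of_eq_some (hd n)).trans (hc (g n))⟩

theorem prec (hf : TuringLEf f O) (hg : TuringLEf g O) :
    TuringLEf (Nat.unpaired fun a n =>
      n.rec (f a) fun k IH => g (Nat.pair a (Nat.pair k IH))) O := by
  obtain ⟨c, hc⟩ := hf
  obtain ⟨d, hd⟩ := hg
  refine ⟨.prec c d, fun n => ?_⟩
  obtain ⟨a, k, rfl⟩ : ∃ a k, n = Nat.pair a k := ⟨_, _, (Nat.pair_unpair n).symm⟩
  simp only [Nat.unpaired, Nat.unpair_pair]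
  induction k with
  | zero => exact (eval_prec_zero O c d a).trans (hc a)
  | succ k ih => rw [eval_prec_succ, ih, Part.bind_some, hd]

theorem of_natPrimrec (hf : Nat.Primrec f) : TuringLEf f O := by
  induction hf with
  | zero => exact ⟨.zero, fun _ => rfl⟩
  | succ => exact ⟨.succ, fun _ => rfl⟩
  | left => exact ⟨.left, fun _ => rfl⟩
  | right => exact ⟨.right, fun _ => rfl⟩
  | pair _ _ hf hg => exact hf.pair hg
  | comp _ _ hf hg => exact hf.comp hg
  | prec _ _ hf hg => exact hf.prec hg

theorem of_primrec (hf : Primrec f) : TuringLEf f O :=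
  of_natPrimrec (Primrec.nat_iff.1 hf)

theorem encode_seg (O : ℕ → ℕ) : TuringLEf (fun l => Encodable.encode (seg O l)) O := by
  let decodeD (n : ℕ) : List ℕ := (Encodable.decode n).getD []
  have hdecode : Primrec decodeD := Primrec.option_getD.comp Primrec.decode (Primrec.const [])
  have hsnoc : Primrec fun n : ℕ => Encodable.encode (decodeD n.unpair.2 ++ [n.unpair.1]) :=
    Primrec.encode.comp (Primrec.list_concat.comp
      (hdecode.comp (Primrec.snd.comp Primrec.unpair)) (Primrec.fst.comp Primrec.unpair))
  have hrec := prec (of_primrec (O := O) (Primrec.const (Encodable.encode ([] : List ℕ))))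
    ((of_primrec hsnoc).comp (((oracle O).comp (of_primrec (Primrec.fst.comp
      (Primrec.unpair.comp (Primrec.snd.comp Primrec.unpair))))).pair (of_primrec (Primrec.snd.comp
      (Primrec.unpair.comp (Primrec.snd.comp Primrec.unpair))))))
  have hl := hrec.comp (of_primrec (Primrec₂.natPair.comp (Primrec.const 0) Primrec.id))
  convert hl using 2 with l
  simp only [Nat.unpaired, Nat.unpair_pair, id]
  induction l with
  | zero => rfl
  | succ l ih => simp only [seg_succ, ← ih, decodeD, Encodable.encodek, Option.getD_some]

end TuringLEf

open CodeO

theorem REPredIn.ceIn {O : ℕ → ℕ} {A : Set ℕ} (hA : REPredIn O (· ∈ A)) : CeIn O A := by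
  obtain ⟨d, hd, hAd⟩ := hA
  obtain ⟨c, hc⟩ : TuringLEf
      (fun n => if d (n.unpair.1, seg O n.unpair.2) then 0 else 1) O := by
    have hd' : Primrec fun n : ℕ =>
        if d (n.unpair.1, (Encodable.decode n.unpair.2).getD []) then 0 else 1 :=
      Primrec.ite (hd.comp ((Primrec.fst.comp Primrec.unpair).pair (Primrec.option_getD.comp
        (Primrec.decode.comp (Primrec.snd.comp Primrec.unpair)) (Primrec.const []))))
        (Primrec.const 0) (Primrec.const 1)
    have h := (TuringLEf.of_primrec hd').comp
      ((TuringLEf.of_primrec (Primrec.fst.comp Primrec.unpair)).pair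
        ((TuringLEf.encode_seg O).comp (TuringLEf.of_primrec (Primrec.snd.comp Primrec.unpair))))
    simpa using h
  obtain ⟨e, he⟩ : TuringLEf (fun n => Nat.pair n 0) O :=
    TuringLEf.of_primrec (Primrec₂.natPair.comp Primrec.id (Primrec.const 0))
  refine ⟨.comp (.rfind' c) e, Set.ext fun n => ?_⟩
  simp only [hAd, Set.mem_ofPred_eq, Part.dom_iff_mem, eval_comp_of_eq_some (he n), mem_eval_rfind',
    Nat.unpair_pair, add_zero, hc, Part.mem_some_iff, exists_eq_left]
  constructor
  · intro h
    exact ⟨_, Nat.find h, ⟨by simp [Nat.find_spec h], fun j hj => by simp [Nat.find_min h hj]⟩, rfl⟩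
  · rintro ⟨_, l, ⟨hl, -⟩, rfl⟩
    exact ⟨l, by by_contra h; simp [h] at hl⟩

theorem ceIn_iff {O : ℕ → ℕ} {A : Set ℕ} : CeIn O A ↔ REPredIn O (· ∈ A) := by
  refine ⟨?_, REPredIn.ceIn⟩
  rintro ⟨c, rfl⟩
  have h : REPredIn O fun n => ∃ y, y ∈ c.eval O n := (REPredIn.eval_graph O c).exists_snd
  exact h.of_iff fun n => Part.dom_iff_mem

namespace CodeO

/-- A code for the constant function with value `n`. -/
def const : ℕ → CodeO
  | 0 => .zero
  | n + 1 => .comp .succ (const n)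

theorem eval_const (O : ℕ → ℕ) (m n : ℕ) : (const m).eval O n = Part.some m := by
  induction m with
  | zero => rfl
  | succ m ih => rw [const, eval_comp_of_eq_some ih]; rfl

theorem primrec_encode_comp_const (c : CodeO) : Primrec fun n => (comp c (const n)).encode := by
  have hcomp (c : CodeO) : Primrec fun e => 2 * (2 * Nat.pair c.encode e + 1) + 5 :=
    Primrec.nat_add.comp (Primrec.nat_mul.comp (Primrec.const 2)
      (Primrec.succ.comp (Primrec.nat_mul.comp (Primrec.const 2)
        (Primrec₂.natPair.comp (Primrec.const c.encode) Primrec.id)))) (Primrec.const 5)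
  have hconst : Primrec fun n => (const n).encode :=
    (Primrec.nat_rec₁ 0 ((hcomp succ).comp Primrec.snd).to₂).of_eq fun n => by
      induction n with
      | zero => rfl
      | succ n ih => simp only [const, encode, ← ih]
  exact (hcomp c).comp hconst

theorem jump_encode_comp_const_eq_zero (O : ℕ → ℕ) (c : CodeO) (n : ℕ) :
    jump O (comp c (const n)).encode = 0 ↔ ¬ (c.eval O n).Dom := by
  simp [jump, encode_injective.eq_iff, eval_comp_of_eq_some (eval_const O n _)]

end CodeO

theorem REPredIn.not_jump {α : Type*} [Primcodable α] {O : ℕ → ℕ} {p : α → Prop}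
    (hp : REPredIn O p) : REPredIn (jump O) fun a => ¬ p a := by
  have hcodes : REPredIn O fun n => ∃ a, Encodable.encode a = n ∧ p a :=
    ((of_primrecPred (Primrec.eq.comp (Primrec.encode.comp Primrec.snd) Primrec.fst)).and
      (hp.comp Primrec.snd)).exists_snd
  obtain ⟨c, hc⟩ := ceIn (A := {n | ∃ a, Encodable.encode a = n ∧ p a}) hcodes
  have hdom (a : α) : p a ↔ (c.eval O (Encodable.encode a)).Dom := by
    simpa using Set.ext_iff.1 hc (Encodable.encode a)
  refine ((oracle_graph (jump O)).comp (((primrec_encode_comp_const c).comp Primrec.encode).pair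
    (Primrec.const 0))).of_iff fun a => ?_
  rw [hdom, ← jump_encode_comp_const_eq_zero, eq_comm]

theorem ceIn_sigmaNumIdx (n : ℕ) (c : CodeO) : CeIn (iterJump n) (SigmaNumIdx n c) := by
  induction n with
  | zero => exact ⟨c, rfl⟩
  | succ n ih => exact ((ceIn_iff.1 ih).not_jump.comp Primrec₂.natPair).exists_snd.ceIn

theorem encode_rat (p : ℚ) :
    Encodable.encode p = Nat.pair (Encodable.encode p.num) p.den := rfl

theorem exists_primrec_sub_eq_int :
    ∃ u v : ℕ → ℕ, Primrec u ∧ Primrec v ∧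
      ∀ z : ℤ, (u (Encodable.encode z) : ℤ) - v (Encodable.encode z) = z := by
  have heven : PrimrecPred fun c : ℕ => c % 2 = 0 :=
    Primrec.eq.comp (Primrec.nat_mod.comp Primrec.id (Primrec.const 2)) (Primrec.const 0)
  have hhalf : Primrec fun c : ℕ => c / 2 := Primrec.nat_div.comp Primrec.id (Primrec.const 2)
  refine ⟨fun c => if c % 2 = 0 then c / 2 else 0, fun c => if c % 2 = 0 then 0 else c / 2 + 1,
    Primrec.ite heven hhalf (Primrec.const 0),
    Primrec.ite heven (Primrec.const 0) (Primrec.succ.comp hhalf), fun z => ?_⟩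
  cases z with
  | ofNat n =>
    have henc : Encodable.encode (Int.ofNat n) = 2 * n := rfl
    simp only [henc]
    simp
  | negSucc n =>
    have henc : Encodable.encode (Int.negSucc n) = 2 * n + 1 := rfl
    have hdiv : (2 * n + 1) / 2 = n := by omega
    simp only [henc, hdiv]
    simp [Nat.add_mod, Int.negSucc_eq]

/-- The fraction `(a - b) / c` presented by the triple `(a, b, c)`. -/
noncomputable def frac (x : ℕ × ℕ × ℕ) : ℝ := (x.1 - x.2.1) / x.2.2

theorem exists_primrecPred_frac_le :
    ∃ R : (ℕ × ℕ × ℕ) × ℕ → Prop, PrimrecPred R ∧ ∀ x : ℕ × ℕ × ℕ, 0 < x.2.2 → ∀ q : ℚ,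
      (R (x, Encodable.encode q) ↔ frac x ≤ q) := by
  obtain ⟨u, v, hu, hv, huv⟩ := exists_primrec_sub_eq_int
  let R : (ℕ × ℕ × ℕ) × ℕ → Prop := fun x =>
    x.1.1 * x.2.unpair.2 + v x.2.unpair.1 * x.1.2.2 ≤
      u x.2.unpair.1 * x.1.2.2 + x.1.2.1 * x.2.unpair.2
  have hfst : Primrec fun x : (ℕ × ℕ × ℕ) × ℕ => x.2.unpair.1 :=
    Primrec.fst.comp (Primrec.unpair.comp Primrec.snd)
  have hden : Primrec fun x : (ℕ × ℕ × ℕ) × ℕ => x.2.unpair.2 :=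
    Primrec.snd.comp (Primrec.unpair.comp Primrec.snd)
  have ha : Primrec fun x : (ℕ × ℕ × ℕ) × ℕ => x.1.1 := Primrec.fst.comp Primrec.fst
  have hb : Primrec fun x : (ℕ × ℕ × ℕ) × ℕ => x.1.2.1 :=
    Primrec.fst.comp (Primrec.snd.comp Primrec.fst)
  have hc : Primrec fun x : (ℕ × ℕ × ℕ) × ℕ => x.1.2.2 :=
    Primrec.snd.comp (Primrec.snd.comp Primrec.fst)
  refine ⟨R, Primrec.nat_le.comp
    (Primrec.nat_add.comp (Primrec.nat_mul.comp ha hden) (Primrec.nat_mul.comp (hv.comp hfst) hc))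
    (Primrec.nat_add.comp (Primrec.nat_mul.comp (hu.comp hfst) hc) (Primrec.nat_mul.comp hb hden)),
    fun ⟨a, b, c⟩ hc q => ?_⟩
  have hq : (q : ℝ) = (u (Encodable.encode q.num) - v (Encodable.encode q.num)) / q.den := by
    rw [Rat.cast_def, ← (mod_cast huv q.num :
      (u (Encodable.encode q.num) : ℝ) - v (Encodable.encode q.num) = q.num)]
  have hden : (0 : ℝ) < q.den := mod_cast q.pos
  have hc : (0 : ℝ) < c := mod_cast hc
  rw [frac, hq, div_le_div_iff₀ hc hden]
  simp only [R, encode_rat, Nat.unpair_pair]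
  rw [← Nat.cast_le (α := ℝ)]
  push_cast
  constructor <;> intro h <;> linarith

theorem primrec_two_pow : Primrec fun n : ℕ => 2 ^ n :=
  (Primrec.nat_rec₁ 1 (Primrec.nat_mul.comp Primrec.snd (Primrec.const 2)).to₂).of_eq fun n => by
    induction n with
    | zero => rfl
    | succ n ih => simp only [pow_succ, ← ih]

theorem primrec_sum_range {α : Type*} [Primcodable α] {f : α → ℕ} {g : α → ℕ → ℕ}
    (hf : Primrec f) (hg : Primrec₂ g) : Primrec fun a => ∑ x ∈ Finset.range (f a), g a x :=
  (Primrec.nat_rec' hf (Primrec.const 0) (h := fun a (y : ℕ × ℕ) => y.2 + g a y.1)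
    (Primrec.nat_add.comp (Primrec.snd.comp Primrec.snd)
      (hg.comp Primrec.fst (Primrec.fst.comp Primrec.snd))).to₂).of_eq fun a => by
    induction f a with
    | zero => rfl
    | succ n ih => simp only [Finset.sum_range_succ, ← ih]

/-- The weight `2 ^ (-ℓ x)` of an object of length `ℓ x`. -/
noncomputable def weight (ℓ : ℕ → ℕ) (x : ℕ) : ℝ := 2⁻¹ ^ ℓ x

theorem weight_nonneg (ℓ : ℕ → ℕ) (x : ℕ) : 0 ≤ weight ℓ x := by
  unfold weight
  positivity

/-- The part of `{x | e x}` visible at stage `n`: only numbers below `n` of length at most `n` are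
admitted, so that its mass is a multiple of `2⁻ⁿ`. -/
noncomputable def stage (ℓ : ℕ → ℕ) (e : ℕ → Prop) (n : ℕ) : Finset ℕ :=
  {x ∈ Finset.range n | ℓ x ≤ n ∧ e x}

/-- The mass of `stage ℓ e n`, in units of `2⁻ⁿ`. -/
noncomputable def scaledMass (ℓ : ℕ → ℕ) (e : ℕ → Prop) (n : ℕ) : ℕ :=
  ∑ x ∈ stage ℓ e n, 2 ^ (n - ℓ x)

theorem mem_stage {ℓ : ℕ → ℕ} {e : ℕ → Prop} {n x : ℕ} :
    x ∈ stage ℓ e n ↔ x < n ∧ ℓ x ≤ n ∧ e x := by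
  simp [stage]

theorem sum_weight_stage (ℓ : ℕ → ℕ) (e : ℕ → Prop) (n : ℕ) :
    ∑ x ∈ stage ℓ e n, weight ℓ x = scaledMass ℓ e n / 2 ^ n := by
  rw [scaledMass, Nat.cast_sum, Finset.sum_div]
  refine Finset.sum_congr rfl fun x hx => ?_
  have hx : ℓ x ≤ n := (mem_stage.1 hx).2.1
  rw [Nat.cast_pow, Nat.cast_ofNat, pow_sub₀ 2 two_ne_zero hx, weight, inv_pow]
  field_simp

theorem primrec_stage_mem {α : Type*} [Primcodable α] {ℓ : ℕ → ℕ} (hℓ : Primrec ℓ)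
    {R : α → ℕ → Prop} (hR : PrimrecRel R) {f g : α → ℕ} (hf : Primrec f) (hg : Primrec g) :
    PrimrecPred fun a => g a ∈ stage ℓ (R a) (f a) :=
  ((Primrec.nat_lt.comp hg hf).and ((Primrec.nat_le.comp (hℓ.comp hg) hf).and
    (hR.comp Primrec.id hg))).of_eq fun _ => mem_stage.symm

theorem primrec_scaledMass {α : Type*} [Primcodable α] {ℓ : ℕ → ℕ} (hℓ : Primrec ℓ)
    {R : α → ℕ → Prop} (hR : PrimrecRel R) {f : α → ℕ} (hf : Primrec f) :
    Primrec fun a => scaledMass ℓ (R a) (f a) := by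
  have hterm : Primrec fun y : α × ℕ =>
      if ℓ y.2 ≤ f y.1 ∧ R y.1 y.2 then 2 ^ (f y.1 - ℓ y.2) else 0 :=
    Primrec.ite ((Primrec.nat_le.comp (hℓ.comp Primrec.snd) (hf.comp Primrec.fst)).and hR)
      (primrec_two_pow.comp (Primrec.nat_sub.comp (hf.comp Primrec.fst) (hℓ.comp Primrec.snd)))
      (Primrec.const 0)
  exact (primrec_sum_range hf hterm.to₂).of_eq fun a => (Finset.sum_filter _ _).symm

/-- The part of `{x | ∃ l, d (x, seg O l)}` visible from the initial segment `L` of `O`. -/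
noncomputable def segStage (ℓ : ℕ → ℕ) (d : ℕ × List ℕ → Prop) (L : List ℕ) : Finset ℕ :=
  stage ℓ (fun x => d (x, L)) L.length

/-- The enumeration of `{x | ∃ l, d (x, seg O l)}` by finite stages. -/
noncomputable def stages (ℓ O : ℕ → ℕ) (d : ℕ × List ℕ → Prop) (t : ℕ) : Finset ℕ :=
  segStage ℓ d (seg O t)

section Stages

variable {ℓ O : ℕ → ℕ} {d : ℕ × List ℕ → Prop}

theorem monotone_stages (hd : ∀ x, Monotone fun t => d (x, seg O t)) :
    Monotone (stages ℓ O d) := by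
  intro s t hst x hx
  simp only [stages, segStage, length_seg] at hx ⊢
  obtain ⟨hxs, hℓ, h⟩ := mem_stage.1 hx
  exact mem_stage.2 ⟨hxs.trans_le hst, hℓ.trans hst, hd x hst h⟩

theorem exists_mem_stages_iff (hd : ∀ x, Monotone fun t => d (x, seg O t)) (x : ℕ) :
    (∃ t, x ∈ stages ℓ O d t) ↔ ∃ t, d (x, seg O t) := by
  simp only [stages, segStage, length_seg]
  refine ⟨fun ⟨t, ht⟩ => ⟨t, (mem_stage.1 ht).2.2⟩, fun ⟨t, ht⟩ => ?_⟩
  exact ⟨t + ℓ x + x + 1, mem_stage.2 ⟨by omega, by omega, hd x (by omega) ht⟩⟩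

end Stages

section TsumIndicator

variable {ι : Type*} {w : ι → ℝ} {A B : Set ι} {E : ℕ → Finset ι}

theorem summable_indicator_of_subset (hAB : A ⊆ B) (hB : Summable (B.indicator w)) :
    Summable (A.indicator w) := by
  simpa [Set.indicator_indicator, Set.inter_eq_self_of_subset_left hAB] using hB.indicator A

theorem sum_le_tsum_indicator {F : Finset ι} (hF : ∀ y ∈ F, y ∈ A) (hw₀ : ∀ x, 0 ≤ w x)
    (hA : Summable (A.indicator w)) : ∑ y ∈ F, w y ≤ ∑' y, A.indicator w y :=
  calc ∑ y ∈ F, w y = ∑ y ∈ F, A.indicator w y :=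
        Finset.sum_congr rfl fun y hy => (Set.indicator_of_mem (hF y hy) w).symm
    _ ≤ ∑' y, A.indicator w y :=
        hA.sum_le_tsum F fun y _ => Set.indicator_nonneg (fun x _ => hw₀ x) y

theorem tendsto_sum_of_monotone (hE : Monotone E) (hA : ∀ x, x ∈ A ↔ ∃ t, x ∈ E t)
    (hw : Summable (A.indicator w)) :
    Tendsto (fun t => ∑ x ∈ E t, w x) atTop (𝓝 (∑' x, A.indicator w x)) := by
  simp only [fun t => sum_eq_tsum_indicator w (E t)]
  refine tendsto_tsum_of_dominated_convergence hw.norm (fun x => ?_)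
    (Eventually.of_forall fun t x => ?_)
  · by_cases hx : x ∈ A
    · obtain ⟨t₀, ht₀⟩ := (hA x).1 hx
      refine tendsto_const_nhds.congr' ?_
      filter_upwards [eventually_ge_atTop t₀] with t ht
      simp [hx, hE ht ht₀]
    · have hxE (t : ℕ) : x ∉ E t := fun h => hx ((hA x).2 ⟨t, h⟩)
      simp [hx, hxE]
  · exact norm_indicator_le_of_subset (fun y hy => (hA y).2 ⟨t, hy⟩) w x

theorem lt_tsum_indicator_iff (hE : Monotone E) (hA : ∀ x, x ∈ A ↔ ∃ t, x ∈ E t)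
    (hw₀ : ∀ x, 0 ≤ w x) (hw : Summable (A.indicator w)) (r : ℝ) :
    r < ∑' x, A.indicator w x ↔ ∃ t, r < ∑ x ∈ E t, w x :=
  ⟨fun h => ((tendsto_sum_of_monotone hE hA hw).eventually_const_lt h).exists,
    fun ⟨t, ht⟩ => ht.trans_le (sum_le_tsum_indicator (fun x hx => (hA x).2 ⟨t, hx⟩) hw₀ hw)⟩

end TsumIndicator

theorem REPredIn.lt_tsum_weight {α : Type*} [Primcodable α] {O ℓ : ℕ → ℕ} (hℓ : Primrec ℓ)
    {S : α → Set ℕ} (hS : REPredIn O fun y : α × ℕ => y.2 ∈ S y.1)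
    (hw : ∀ a, Summable ((S a).indicator (weight ℓ))) :
    REPredIn O fun y : α × ℕ => 2⁻¹ ^ y.2 < ∑' x, (S y.1).indicator (weight ℓ) x := by
  obtain ⟨d, hd, hmono, hSd⟩ := hS.exists_monotone
  let D (a : α) (z : ℕ × List ℕ) : Prop := d ((a, z.1), z.2)
  have hmass : Primrec fun z : (α × ℕ) × List ℕ =>
      scaledMass ℓ (fun x => d ((z.1.1, x), z.2)) z.2.length :=
    primrec_scaledMass hℓ (R := fun (z : (α × ℕ) × List ℕ) x => d ((z.1.1, x), z.2))
      (hd.comp (((Primrec.fst.comp (Primrec.fst.comp Primrec.fst)).pair Primrec.snd).pair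
        (Primrec.snd.comp Primrec.fst))) (Primrec.list_length.comp Primrec.snd)
  refine ⟨fun z => 2 ^ z.2.length <
      2 ^ z.1.2 * scaledMass ℓ (fun x => d ((z.1.1, x), z.2)) z.2.length,
    Primrec.nat_lt.comp (primrec_two_pow.comp (Primrec.list_length.comp Primrec.snd))
      (Primrec.nat_mul.comp (primrec_two_pow.comp (Primrec.snd.comp Primrec.fst)) hmass),
    fun ⟨a, k⟩ => ?_⟩
  have hD (x : ℕ) : Monotone fun t => D a (x, seg O t) := hmono (a, x)
  have hmem (x : ℕ) : x ∈ S a ↔ ∃ t, x ∈ stages ℓ O (D a) t := by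
    rw [exists_mem_stages_iff hD]
    exact hSd (a, x)
  beta_reduce
  rw [lt_tsum_indicator_iff (monotone_stages hD) hmem (weight_nonneg ℓ) (hw a)]
  refine exists_congr fun t => ?_
  rw [stages, segStage, sum_weight_stage, length_seg, inv_pow, inv_eq_one_div,
    div_lt_div_iff₀ (by positivity) (by positivity), one_mul, mul_comm, ← Nat.cast_lt (α := ℝ)]
  push_cast
  rfl

/-- The union of the intervals `(a s - ε s, a t + ε s)` over all pairs `s ≤ t < N` between which
`g` does not change. -/
def plateauUnion {Γ : Type*} (g : ℕ → Γ) (a ε : ℕ → ℝ) (N : ℕ) : Set ℝ :=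
  {x | ∃ s t, s ≤ t ∧ t < N ∧ g s = g t ∧ x ∈ Set.Ioo (a s - ε s) (a t + ε s)}

theorem monotone_plateauUnion {Γ : Type*} (g : ℕ → Γ) (a ε : ℕ → ℝ) :
    Monotone (plateauUnion g a ε) := fun _ _ hMN _ ⟨s, t, hst, ht, h⟩ =>
  ⟨s, t, hst, ht.trans_le hMN, h⟩

section PlateauUnion

variable {Γ : Type*} [PartialOrder Γ] {g : ℕ → Γ} {a b ε : ℕ → ℝ}

theorem plateauUnion_succ_subset (hg : Monotone g) (ha : Monotone a) (hε : Antitone ε) {r T : ℕ}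
    (hr : IsLeast {s | g s = g T} r) :
    plateauUnion g a ε (T + 1) ⊆ plateauUnion g a ε r ∪ Set.Ioo (a r - ε r) (a T + ε r) := by
  rintro x ⟨s, t, hst, ht, hgst, hx⟩
  rcases lt_or_ge t r with htr | hrt
  · exact Or.inl ⟨s, t, hst, htr, hgst, hx⟩
  have htT : t ≤ T := Nat.lt_succ_iff.1 ht
  have hgt : g t = g T := le_antisymm (hg htT) (hr.1.symm.trans_le (hg hrt))
  have hrs : r ≤ s := hr.2 (hgst.trans hgt)
  exact Or.inr ⟨(sub_le_sub (ha hrs) (hε hrs)).trans_lt hx.1,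
    hx.2.trans_le (add_le_add (ha htT) (hε hrs))⟩

theorem volume_plateauUnion_le (hg : Monotone g) (ha : Monotone a) (hb : Monotone b)
    (hb₀ : ∀ t, 0 ≤ b t) (hε : Antitone ε) (hε₀ : ∀ s, 0 ≤ ε s)
    (hab : ∀ s t, s ≤ t → g s = g t → a t - a s ≤ b t - b s) (N : ℕ) :
    volume (plateauUnion g a ε N) ≤ ENNReal.ofReal (b N + 2 * ∑ s ∈ Finset.range N, ε s) := by
  induction N using Nat.strong_induction_on with
  | _ N ih =>
  cases N with
  | zero => simp [plateauUnion]
  | succ T =>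
    have hne : ∃ s, g s = g T := ⟨T, rfl⟩
    have hr : IsLeast {s | g s = g T} (Nat.find hne) :=
      ⟨Nat.find_spec hne, fun _ => Nat.find_min' hne⟩
    generalize Nat.find hne = r at hr
    have hrT : r ≤ T := hr.2 rfl
    have hsum : ∑ s ∈ Finset.range r, ε s + ε r ≤ ∑ s ∈ Finset.range (T + 1), ε s := by
      rw [← Finset.sum_range_succ]
      exact Finset.sum_le_sum_of_subset_of_nonneg (Finset.range_mono (by omega))
        fun s _ _ => hε₀ s
    have hsum₀ : 0 ≤ ∑ s ∈ Finset.range r, ε s := Finset.sum_nonneg fun s _ => hε₀ s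
    calc volume (plateauUnion g a ε (T + 1))
        ≤ volume (plateauUnion g a ε r) + volume (Set.Ioo (a r - ε r) (a T + ε r)) :=
          (measure_mono (plateauUnion_succ_subset hg ha hε hr)).trans (measure_union_le _ _)
      _ ≤ ENNReal.ofReal (b r + 2 * ∑ s ∈ Finset.range r, ε s) +
            ENNReal.ofReal (a T + ε r - (a r - ε r)) :=
          add_le_add (ih r (by omega)) Real.volume_Ioo.le
      _ = ENNReal.ofReal (b r + 2 * ∑ s ∈ Finset.range r, ε s + (a T + ε r - (a r - ε r))) :=
          (ENNReal.ofReal_add (by linarith [hb₀ r]) (by linarith [ha hrT, hε₀ r])).symm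
      _ ≤ ENNReal.ofReal (b (T + 1) + 2 * ∑ s ∈ Finset.range (T + 1), ε s) :=
          ENNReal.ofReal_le_ofReal (by linarith [hab r T hrT hr.1, hb T.le_succ])

theorem volume_iUnion_plateauUnion_le (hg : Monotone g) (ha : Monotone a) (hb : Monotone b)
    (hb₀ : ∀ t, 0 ≤ b t) (hε : Antitone ε) (hε₀ : ∀ s, 0 ≤ ε s)
    (hab : ∀ s t, s ≤ t → g s = g t → a t - a s ≤ b t - b s) {δ : ℝ} (hbδ : ∀ t, b t ≤ δ)
    (hsum : Summable ε) :
    volume (⋃ N, plateauUnion g a ε N) ≤ ENNReal.ofReal (δ + 2 * ∑' s, ε s) := by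
  rw [(monotone_plateauUnion g a ε).measure_iUnion]
  refine iSup_le fun N => (volume_plateauUnion_le hg ha hb hb₀ hε hε₀ hab N).trans ?_
  have := hsum.sum_le_tsum (Finset.range N) fun s _ => hε₀ s
  exact ENNReal.ofReal_le_ofReal (by linarith [hbδ N])

end PlateauUnion

/-- The `i`-th component of the Martin-Löf test capturing the mass of a set `A ⊆ B` enumerated by
`E`. A bound `m` is found beyond which `B` has mass at most `2 ^ (-(i + 1))`; as long as
no number below `m` enters `E`, the mass of `E` can move by at most that much. The margins
`2 ^ (-(s + i + 3))` sum to `2 ^ (-(i + 2))`, and each counts twice. -/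
def stableCover (w : ℕ → ℝ) (B : Set ℕ) (E : ℕ → Finset ℕ) (i : ℕ) : Set ℝ :=
  {x | ∃ m s t, ∑' y, (B ∩ Set.Ici m).indicator w y ≤ 2⁻¹ ^ (i + 1) ∧ s ≤ t ∧
    (∀ y < m, y ∈ E t → y ∈ E s) ∧
    x ∈ Set.Ioo (∑ y ∈ E s, w y - 2⁻¹ ^ (s + i + 3)) (∑ y ∈ E t, w y + 2⁻¹ ^ (s + i + 3))}

section StableCover

variable {w : ℕ → ℝ} {A B : Set ℕ} {E : ℕ → Finset ℕ}

theorem tendsto_tsum_indicator_inter_Ici (hB : Summable (B.indicator w)) :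
    Tendsto (fun m => ∑' y, (B ∩ Set.Ici m).indicator w y) atTop (𝓝 0) := by
  rw [← tsum_zero (α := ℝ) (β := ℕ)]
  refine tendsto_tsum_of_dominated_convergence hB.norm (fun y => ?_)
    (Eventually.of_forall fun m y => norm_indicator_le_of_subset Set.inter_subset_left w y)
  refine tendsto_const_nhds.congr' ?_
  filter_upwards [eventually_gt_atTop y] with m hm
  simp [hm.not_ge]

theorem mem_stableCover (hw₀ : ∀ x, 0 ≤ w x) (hE : Monotone E) (hA : ∀ x, x ∈ A ↔ ∃ t, x ∈ E t)
    (hAB : A ⊆ B) (hB : Summable (B.indicator w)) (i : ℕ) :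
    ∑' x, A.indicator w x ∈ stableCover w B E i := by
  have hpos (k : ℕ) : (0 : ℝ) < 2⁻¹ ^ k := by positivity
  obtain ⟨m, hm⟩ :=
    ((tendsto_tsum_indicator_inter_Ici hB).eventually_le_const (hpos (i + 1))).exists
  obtain ⟨s, hs⟩ : ∃ s, ∀ y < m, y ∈ A → y ∈ E s := by
    choose! r hr using fun y => (hA y).1
    exact ⟨(Finset.range m).sup r, fun y hy hyA =>
      hE (Finset.le_sup (Finset.mem_range.2 hy)) (hr y hyA)⟩
  have hAw : Summable (A.indicator w) := summable_indicator_of_subset hAB hB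
  have hlim := tendsto_sum_of_monotone hE hA hAw
  obtain ⟨t, hst, ht⟩ := ((eventually_ge_atTop s).and (hlim.eventually_const_lt
    (sub_lt_self _ (hpos (s + i + 3))))).exists
  exact ⟨m, s, t, hm, hst, fun y hy hyt => hs y hy ((hA y).2 ⟨t, hyt⟩),
    (sub_lt_self _ (hpos _)).trans_le
      (sum_le_tsum_indicator (fun y hy => (hA y).2 ⟨s, hy⟩) hw₀ hAw),
    sub_lt_iff_lt_add.1 ht⟩

theorem stableCover_subset {i m : ℕ}
    (hm : IsLeast {m | ∑' y, (B ∩ Set.Ici m).indicator w y ≤ 2⁻¹ ^ (i + 1)} m)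
    (hE : Monotone E) :
    stableCover w B E i ⊆ ⋃ N, plateauUnion (fun t => {y ∈ E t | y < m})
      (fun t => ∑ y ∈ E t, w y) (fun s => 2⁻¹ ^ (s + i + 3)) N := by
  rintro x ⟨m', s, t, hm', hst, hstable, hx⟩
  refine Set.mem_iUnion.2 ⟨t + 1, s, t, hst, t.lt_succ_self, ?_, hx⟩
  refine (Finset.filter_subset_filter _ (hE hst)).antisymm fun y hy => ?_
  obtain ⟨hyt, hym⟩ := Finset.mem_filter.1 hy
  exact Finset.mem_filter.2 ⟨hstable y (hym.trans_le (hm.2 hm')) hyt, hym⟩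

theorem volume_stableCover_le (hw₀ : ∀ x, 0 ≤ w x) (hE : Monotone E) (hEB : ∀ t, ↑(E t) ⊆ B)
    (hB : Summable (B.indicator w)) (i : ℕ) :
    volume (stableCover w B E i) ≤ ENNReal.ofReal (2⁻¹ ^ i) := by
  have hpos : (0 : ℝ) < 2⁻¹ ^ (i + 1) := by positivity
  have hne := ((tendsto_tsum_indicator_inter_Ici hB).eventually_le_const hpos).exists
  have hm : IsLeast {m | ∑' y, (B ∩ Set.Ici m).indicator w y ≤ 2⁻¹ ^ (i + 1)} (Nat.find hne) :=
    ⟨Nat.find_spec hne, fun _ => Nat.find_min' hne⟩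
  generalize Nat.find hne = m at hm
  have hε : HasSum (fun s : ℕ => (2⁻¹ : ℝ) ^ (s + i + 3)) (2 * 2⁻¹ ^ (i + 3)) := by
    simpa only [add_assoc, fun s => pow_add (2⁻¹ : ℝ) s (i + 3), one_div]
      using hasSum_geometric_two.mul_right (2⁻¹ ^ (i + 3))
  refine (measure_mono (stableCover_subset hm hE)).trans
    ((volume_iUnion_plateauUnion_le (b := fun t => ∑ y ∈ E t with ¬ y < m, w y)
      (δ := 2⁻¹ ^ (i + 1)) ?_ ?_ ?_ ?_ ?_ ?_ ?_ ?_ hε.summable).trans_eq ?_)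
  · exact fun s t hst => Finset.filter_subset_filter _ (hE hst)
  · exact fun s t hst => Finset.sum_le_sum_of_subset_of_nonneg (hE hst) fun y _ _ => hw₀ y
  · exact fun s t hst => Finset.sum_le_sum_of_subset_of_nonneg
      (Finset.filter_subset_filter _ (hE hst)) fun y _ _ => hw₀ y
  · exact fun t => Finset.sum_nonneg fun y _ => hw₀ y
  · exact fun s t hst => pow_le_pow_of_le_one (by norm_num) (by norm_num) (by omega)
  · exact fun s => by positivity
  · intro s t _ hst
    simp only [← Finset.sum_filter_add_sum_filter_not (E _) (· < m) w, hst]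
    linarith
  · intro t
    refine (sum_le_tsum_indicator (fun y hy => ?_) hw₀
      (summable_indicator_of_subset Set.inter_subset_left hB)).trans hm.1
    obtain ⟨hyt, hym⟩ := Finset.mem_filter.1 hy
    exact ⟨hEB t hyt, not_lt.1 hym⟩
  · rw [hε.tsum_eq]
    congr 1
    ring

end StableCover

theorem exists_ceIn_testSet_eq {β : Type*} [Primcodable β] {O : ℕ → ℕ} {p : ℕ × β → Prop}
    (hp : REPredIn O p) {lo hi : ℕ × β → ℕ × ℕ × ℕ} (hlo : Primrec lo) (hhi : Primrec hi)
    (hlo₀ : ∀ y, 0 < (lo y).2.2) (hhi₀ : ∀ y, 0 < (hi y).2.2) :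
    ∃ W, CeIn O W ∧ ∀ i,
      testSet W i = {x | ∃ z, p (i, z) ∧ x ∈ Set.Ioo (frac (lo (i, z))) (frac (hi (i, z)))} := by
  obtain ⟨R, hR, hRfrac⟩ := exists_primrecPred_frac_le
  let r (n : ℕ) (z : β) : Prop := p (n.unpair.1, z) ∧
    R (lo (n.unpair.1, z), n.unpair.2.unpair.1) ∧ ¬ R (hi (n.unpair.1, z), n.unpair.2.unpair.2)
  have hidx : Primrec fun y : ℕ × β => (y.1.unpair.1, y.2) :=
    (Primrec.fst.comp (Primrec.unpair.comp Primrec.fst)).pair Primrec.snd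
  have hpq : Primrec fun y : ℕ × β => y.1.unpair.2.unpair :=
    Primrec.unpair.comp (Primrec.snd.comp (Primrec.unpair.comp Primrec.fst))
  have hr : REPredIn O fun y : ℕ × β => r y.1 y.2 :=
    (hp.comp hidx).and (REPredIn.of_primrecPred
      ((hR.comp ((hlo.comp hidx).pair (Primrec.fst.comp hpq))).and
        (hR.comp ((hhi.comp hidx).pair (Primrec.snd.comp hpq))).not))
  refine ⟨{n | ∃ z, r n z}, hr.exists_snd.ceIn, fun i => Set.ext fun x => ?_⟩
  have hmem (p' q' : ℚ) : Nat.pair i (Encodable.encode (p', q')) ∈ {n | ∃ z, r n z} ↔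
      ∃ z, p (i, z) ∧ frac (lo (i, z)) ≤ p' ∧ q' < frac (hi (i, z)) := by
    simp only [Set.mem_ofPred_eq, r, Nat.unpair_pair, Encodable.encode_prod_val,
      hRfrac _ (hlo₀ _), hRfrac _ (hhi₀ _), not_le]
  constructor
  · rintro ⟨p', q', hW, hpx, hxq⟩
    obtain ⟨z, hz, hlop, hqhi⟩ := (hmem p' q').1 hW
    exact ⟨z, hz, hlop.trans_lt hpx, hxq.trans hqhi⟩
  · rintro ⟨z, hz, hlox, hxhi⟩
    obtain ⟨p', hlop, hpx⟩ := exists_rat_btwn hlox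
    obtain ⟨q', hxq, hqhi⟩ := exists_rat_btwn hxhi
    exact ⟨p', q', (hmem p' q').2 ⟨z, hz, hlop.le, hqhi⟩, hpx, hxq⟩

section Capture

variable {O ℓ : ℕ → ℕ} {B : Set ℕ} {d : ℕ × List ℕ → Prop}

theorem frac_sub_two_pow (ℓ : ℕ → ℕ) (e : ℕ → Prop) (s k : ℕ) :
    frac (scaledMass ℓ e s * 2 ^ k, 1, 2 ^ (s + k)) =
      ∑ x ∈ stage ℓ e s, weight ℓ x - 2⁻¹ ^ (s + k) := by
  rw [sum_weight_stage, frac]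
  push_cast
  rw [inv_pow, pow_add]
  field_simp

theorem frac_add_two_pow (ℓ : ℕ → ℕ) (e : ℕ → Prop) (t k : ℕ) :
    frac (scaledMass ℓ e t * 2 ^ k + 2 ^ t, 0, 2 ^ (t + k)) =
      ∑ x ∈ stage ℓ e t, weight ℓ x + 2⁻¹ ^ k := by
  rw [sum_weight_stage, frac]
  push_cast
  rw [inv_pow, pow_add]
  field_simp
  ring

theorem REPredIn.tsum_weight_le (hℓ : Primrec ℓ) (hB : CeIn O B)
    (hBw : Summable (B.indicator (weight ℓ))) :
    REPredIn (jump O) fun y : ℕ × ℕ =>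
      ∑' x, (B ∩ Set.Ici y.1).indicator (weight ℓ) x ≤ 2⁻¹ ^ y.2 := by
  have hmem : REPredIn O fun y : ℕ × ℕ => y.2 ∈ B ∩ Set.Ici y.1 :=
    ((ceIn_iff.1 hB).comp Primrec.snd).and (of_primrecPred (Primrec.nat_le.comp Primrec.fst
      Primrec.snd))
  exact (hmem.lt_tsum_weight hℓ fun m =>
    summable_indicator_of_subset Set.inter_subset_left hBw).not_jump.of_iff fun y => not_lt.symm

theorem primrecPred_segStage_stable (hℓ : Primrec ℓ) (hd : PrimrecPred d) :
    PrimrecPred fun z : ℕ × List ℕ × List ℕ =>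
      ∀ x < z.1, x ∈ segStage ℓ d z.2.2 → x ∈ segStage ℓ d z.2.1 := by
  have hmem : PrimrecRel fun (x : ℕ) (L : List ℕ) => x ∈ segStage ℓ d L :=
    primrec_stage_mem (α := ℕ × List ℕ) (R := fun y x => d (x, y.2)) hℓ
      (hd.comp (Primrec.snd.pair (Primrec.snd.comp Primrec.fst)))
      (Primrec.list_length.comp Primrec.snd) Primrec.fst
  have himp : PrimrecRel fun (x : ℕ) (z : ℕ × List ℕ × List ℕ) =>
      x ∈ segStage ℓ d z.2.2 → x ∈ segStage ℓ d z.2.1 :=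
    ((hmem.comp Primrec.fst (Primrec.snd.comp (Primrec.snd.comp Primrec.snd))).not.or
      (hmem.comp Primrec.fst (Primrec.fst.comp (Primrec.snd.comp Primrec.snd)))).of_eq
      fun _ => imp_iff_not_or.symm
  exact (himp.forall_mem_list.comp (Primrec.list_range.comp Primrec.fst) Primrec.id).of_eq
    fun z => by simp only [List.mem_range, id]

theorem exists_primrec_frac_segStage (hℓ : Primrec ℓ) (hd : PrimrecPred d) :
    ∃ lo hi : ℕ × ℕ × List ℕ × List ℕ → ℕ × ℕ × ℕ, Primrec lo ∧ Primrec hi ∧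
      (∀ y, 0 < (lo y).2.2) ∧ (∀ y, 0 < (hi y).2.2) ∧ ∀ i m L M,
        frac (lo (i, m, L, M)) =
          ∑ x ∈ segStage ℓ d L, weight ℓ x - 2⁻¹ ^ (L.length + i + 3) ∧
        frac (hi (i, m, L, M)) =
          ∑ x ∈ segStage ℓ d M, weight ℓ x + 2⁻¹ ^ (L.length + i + 3) := by
  let num (L : List ℕ) : ℕ := scaledMass ℓ (fun x => d (x, L)) L.length
  have hnum : Primrec num :=
    primrec_scaledMass (R := fun L x => d (x, L)) hℓ (hd.comp (Primrec.snd.pair Primrec.fst))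
      Primrec.list_length
  have hi : Primrec fun y : ℕ × ℕ × List ℕ × List ℕ => y.1 + 3 :=
    Primrec.nat_add.comp Primrec.fst (Primrec.const 3)
  have hL : Primrec fun y : ℕ × ℕ × List ℕ × List ℕ => y.2.2.1 :=
    Primrec.fst.comp (Primrec.snd.comp Primrec.snd)
  have hM : Primrec fun y : ℕ × ℕ × List ℕ × List ℕ => y.2.2.2 :=
    Primrec.snd.comp (Primrec.snd.comp Primrec.snd)
  have hL' := Primrec.list_length.comp hL
  have hM' := Primrec.list_length.comp hM
  have hLi := Primrec.nat_add.comp hL' hi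
  refine ⟨fun y => (num y.2.2.1 * 2 ^ (y.1 + 3), 1, 2 ^ (y.2.2.1.length + (y.1 + 3))),
    fun y => (num y.2.2.2 * 2 ^ (y.2.2.1.length + (y.1 + 3)) + 2 ^ y.2.2.2.length, 0,
      2 ^ (y.2.2.2.length + (y.2.2.1.length + (y.1 + 3)))),
    (Primrec.nat_mul.comp (hnum.comp hL) (primrec_two_pow.comp hi)).pair
      ((Primrec.const 1).pair (primrec_two_pow.comp hLi)),
    (Primrec.nat_add.comp (Primrec.nat_mul.comp (hnum.comp hM) (primrec_two_pow.comp hLi))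
      (primrec_two_pow.comp hM')).pair
      ((Primrec.const 0).pair (primrec_two_pow.comp (Primrec.nat_add.comp hM' hLi))),
    fun _ => by positivity, fun _ => by positivity, fun i m L M => ⟨?_, ?_⟩⟩
  · exact frac_sub_two_pow ℓ _ L.length (i + 3)
  · exact frac_add_two_pow ℓ _ M.length (L.length + (i + 3))

theorem exists_ceIn_testSet_eq_stableCover (hℓ : Primrec ℓ) (hd : PrimrecPred d)
    (hB : REPredIn O fun y : ℕ × ℕ =>
      ∑' x, (B ∩ Set.Ici y.1).indicator (weight ℓ) x ≤ 2⁻¹ ^ y.2) :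
    ∃ W, CeIn O W ∧ ∀ i, testSet W i = stableCover (weight ℓ) B (stages ℓ O d) i := by
  obtain ⟨lo, hi, hlo, hhi, hlo₀, hhi₀, hfrac⟩ := exists_primrec_frac_segStage hℓ hd
  let p (y : ℕ × ℕ × List ℕ × List ℕ) : Prop :=
    (∑' x, (B ∩ Set.Ici y.2.1).indicator (weight ℓ) x ≤ 2⁻¹ ^ (y.1 + 1)) ∧
      y.2.2.1 = seg O y.2.2.1.length ∧ y.2.2.2 = seg O y.2.2.2.length ∧
      y.2.2.1.length ≤ y.2.2.2.length ∧
      ∀ x < y.2.1, x ∈ segStage ℓ d y.2.2.2 → x ∈ segStage ℓ d y.2.2.1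
  have hL : Primrec fun y : ℕ × ℕ × List ℕ × List ℕ => y.2.2.1 :=
    Primrec.fst.comp (Primrec.snd.comp Primrec.snd)
  have hM : Primrec fun y : ℕ × ℕ × List ℕ × List ℕ => y.2.2.2 :=
    Primrec.snd.comp (Primrec.snd.comp Primrec.snd)
  have hp : REPredIn O p :=
    (hB.comp ((Primrec.fst.comp Primrec.snd).pair (Primrec.succ.comp Primrec.fst))).and
      (((REPredIn.eq_seg O).comp hL).and (((REPredIn.eq_seg O).comp hM).and
        (REPredIn.of_primrecPred ((Primrec.nat_le.comp (Primrec.list_length.comp hL)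
          (Primrec.list_length.comp hM)).and
            ((primrecPred_segStage_stable hℓ hd).comp Primrec.snd)))))
  obtain ⟨W, hW, hWtest⟩ := exists_ceIn_testSet_eq hp hlo hhi hlo₀ hhi₀
  refine ⟨W, hW, fun i => (hWtest i).trans (Set.ext fun x => ⟨?_, ?_⟩)⟩
  · rintro ⟨⟨m, L, M⟩, ⟨hm, hL, hM, hLM, hstable⟩, hx⟩
    rw [(hfrac i m L M).1, (hfrac i m L M).2] at hx
    refine ⟨m, L.length, M.length, hm, hLM, ?_, ?_⟩ <;> rw [stages, stages, ← hL, ← hM]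
    exacts [hstable, hx]
  · rintro ⟨m, s, t, hm, hst, hstable, hx⟩
    refine ⟨(m, seg O s, seg O t), ⟨hm, by simp, by simp, by simpa using hst, hstable⟩, ?_⟩
    rw [(hfrac i m _ _).1, (hfrac i m _ _).2, length_seg]
    exact hx

theorem not_mlRandomIn_tsum_weight {A : Set ℕ} (hℓ : Primrec ℓ) (hAB : A ⊆ B) (hB : CeIn O B)
    (hA : CeIn (jump O) A) (hBw : Summable (B.indicator (weight ℓ))) :
    ¬ MLRandomIn (jump O) (∑' x, A.indicator (weight ℓ) x) := by
  obtain ⟨d, hd, hmono, hAd⟩ := (ceIn_iff.1 hA).exists_monotone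
  have hE : Monotone (stages ℓ (jump O) d) := monotone_stages hmono
  have hmem (x : ℕ) : x ∈ A ↔ ∃ t, x ∈ stages ℓ (jump O) d t :=
    (hAd x).trans (exists_mem_stages_iff hmono x).symm
  obtain ⟨W, hW, hWE⟩ := exists_ceIn_testSet_eq_stableCover hℓ hd
    (REPredIn.tsum_weight_le hℓ hB hBw)
  intro hrandom
  obtain ⟨i, hi⟩ := hrandom W hW fun i => by
    rw [hWE]
    exact volume_stableCover_le (weight_nonneg ℓ) hE
      (fun t x hx => hAB ((hmem x).2 ⟨t, hx⟩)) hBw i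
  rw [hWE] at hi
  exact hi (mem_stableCover (weight_nonneg ℓ) hE hmem hAB hBw i)

end Capture

theorem initSeg_prefix_initSeg (X : Cantor) {m n : ℕ} (h : m ≤ n) :
    initSeg X m <+: initSeg X n := by
  have htake : initSeg X m = (initSeg X n).take m := by
    simp [initSeg, ← List.map_take, List.take_range, h]
  exact htake ▸ List.take_prefix m _

theorem extends_append_singleton {X : Cantor} {σ : List Bool} {b : Bool} :
    Extends X (σ ++ [b]) ↔ Extends X σ ∧ X σ.length = b := by
  simp [Extends, initSeg, List.range_succ]

theorem Extends.prefix_of_length_le {X : Cantor} {σ τ : List Bool} (hσ : Extends X σ)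
    (hτ : Extends X τ) (h : σ.length ≤ τ.length) : σ <+: τ := by
  rw [← hσ, ← hτ]
  exact initSeg_prefix_initSeg X h

theorem IsPrefixFree.eq_of_extends {V : Set (List Bool)} (hV : IsPrefixFree V) {X : Cantor}
    {σ τ : List Bool} (hσV : σ ∈ V) (hτV : τ ∈ V) (hσ : Extends X σ) (hτ : Extends X τ) :
    σ = τ := by
  rcases le_total σ.length τ.length with h | h
  · exact hV σ hσV τ hτV (hσ.prefix_of_length_le hτ h)
  · exact (hV τ hτV σ hσV (hτ.prefix_of_length_le hσ h)).symm

theorem IsPrefixFree.mono {V S : Set (List Bool)} (hS : IsPrefixFree S) (hVS : V ⊆ S) :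
    IsPrefixFree V := fun σ hσ τ hτ => hS σ (hVS hσ) τ (hVS hτ)

theorem cyl_eq_iUnion (V : Set (List Bool)) : cyl V = ⋃ σ : V, {X | Extends X σ} := by
  ext X
  simp only [cyl, Set.mem_ofPred_eq, Set.mem_iUnion]
  exact ⟨fun ⟨n, hn⟩ => ⟨⟨_, hn⟩, by simp [Extends, initSeg]⟩,
    fun ⟨σ, hσ⟩ => ⟨σ.1.length, hσ.symm ▸ σ.2⟩⟩

theorem measurableSet_extends (σ : List Bool) : MeasurableSet {X | Extends X σ} := by
  induction σ using List.reverseRecOn with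
  | nil => simp [Extends, initSeg]
  | append_singleton σ b ih =>
    have hbit : Measurable fun X : Cantor => X σ.length := measurable_pi_apply _
    simp only [extends_append_singleton]
    exact ih.inter (hbit (MeasurableSet.of_discrete (s := {b})))

theorem measurable_digits : Measurable digits := by
  refine measurable_pi_iff.2 fun n => ?_
  exact (measurable_from_top (f := fun z : ℤ => decide (z % 2 = 1))).comp
    (Int.measurable_floor.comp (measurable_id.mul_const _))

/-- The integer with binary expansion `σ`, most significant bit first. -/
def binaryValue (σ : List Bool) : ℤ := σ.foldl (fun z b => 2 * z + cond b 1 0) 0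

theorem binaryValue_append_singleton (σ : List Bool) (b : Bool) :
    binaryValue (σ ++ [b]) = 2 * binaryValue σ + cond b 1 0 := by
  simp [binaryValue]

theorem binaryValue_mem_Ico (σ : List Bool) : binaryValue σ ∈ Set.Ico 0 (2 ^ σ.length) := by
  induction σ using List.reverseRecOn with
  | nil => simp [binaryValue]
  | append_singleton σ b ih =>
    obtain ⟨h₀, h₁⟩ := ih
    rw [binaryValue_append_singleton, List.length_append, List.length_singleton, pow_succ]
    cases b <;> constructor <;> simp <;> omega

theorem extends_digits_iff {x : ℝ} (hx : x ∈ Set.Ico 0 1) (σ : List Bool) :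
    Extends (digits x) σ ↔ ⌊x * 2 ^ σ.length⌋ = binaryValue σ := by
  induction σ using List.reverseRecOn with
  | nil => simpa [Extends, initSeg, binaryValue] using hx
  | append_singleton σ b ih =>
    have hdiv : ⌊x * 2 ^ σ.length⌋ = ⌊x * 2 ^ (σ.length + 1)⌋ / 2 :=
      calc ⌊x * 2 ^ σ.length⌋ = ⌊x * 2 ^ (σ.length + 1) / (2 : ℕ)⌋ := by
            rw [pow_succ, ← mul_assoc, Nat.cast_two, mul_div_cancel_right₀ _ two_ne_zero]
        _ = ⌊x * 2 ^ (σ.length + 1)⌋ / 2 := Int.floor_div_natCast _ 2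
    rw [extends_append_singleton, ih, hdiv, binaryValue_append_singleton, List.length_append,
      List.length_singleton, digits]
    cases b <;> simp <;> omega

theorem digits_preimage_extends (σ : List Bool) :
    digits ⁻¹' {X | Extends X σ} ∩ Set.Ico 0 1 =
      Set.Ico (binaryValue σ / 2 ^ σ.length : ℝ) ((binaryValue σ + 1) / 2 ^ σ.length) := by
  have hpos : (0 : ℝ) < 2 ^ σ.length := by positivity
  have hfloor (x : ℝ) : ⌊x * 2 ^ σ.length⌋ = binaryValue σ ↔
      x ∈ Set.Ico (binaryValue σ / 2 ^ σ.length : ℝ) ((binaryValue σ + 1) / 2 ^ σ.length) := by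
    rw [Int.floor_eq_iff, Set.mem_Ico, div_le_iff₀ hpos, lt_div_iff₀ hpos]
  have hsub : Set.Ico (binaryValue σ / 2 ^ σ.length : ℝ) ((binaryValue σ + 1) / 2 ^ σ.length) ⊆
      Set.Ico 0 1 := by
    obtain ⟨h₀, h₁⟩ := binaryValue_mem_Ico σ
    refine Set.Ico_subset_Ico (div_nonneg (mod_cast h₀) hpos.le) ((div_le_one hpos).2 ?_)
    exact_mod_cast h₁
  ext x
  exact ⟨fun ⟨hσ, hx⟩ => (hfloor x).1 ((extends_digits_iff hx σ).1 hσ),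
    fun hx => ⟨(extends_digits_iff (hsub hx) σ).2 ((hfloor x).2 hx), hsub hx⟩⟩

theorem mu_extends (σ : List Bool) : mu {X | Extends X σ} = ENNReal.ofReal (2⁻¹ ^ σ.length) := by
  rw [mu, Measure.map_apply measurable_digits (measurableSet_extends σ),
    Measure.restrict_apply (measurable_digits (measurableSet_extends σ)),
    digits_preimage_extends, Real.volume_Ico, ← sub_div, add_sub_cancel_left, one_div, inv_pow]

instance isProbabilityMeasure_mu : IsProbabilityMeasure mu :=
  ⟨by simp [mu, Measure.map_apply measurable_digits MeasurableSet.univ]⟩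

theorem hasSum_muR_cyl {V : Set (List Bool)} (hV : IsPrefixFree V) :
    HasSum (fun σ : V => (2⁻¹ : ℝ) ^ σ.1.length) (muR (cyl V)) := by
  have hmu : mu (cyl V) = ∑' σ : V, mu {X | Extends X σ} := by
    rw [cyl_eq_iUnion]
    refine measure_iUnion (fun σ τ hne => ?_) fun σ => measurableSet_extends σ
    exact Set.disjoint_left.2 fun X hσ hτ =>
      hne (Subtype.ext (hV.eq_of_extends σ.2 τ.2 hσ hτ))
  have hsum := ENNReal.hasSum_toReal (hmu ▸ measure_ne_top mu (cyl V))
  rw [← ENNReal.tsum_toReal_eq fun σ => measure_ne_top mu _, ← hmu] at hsum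
  exact hsum.congr_fun fun σ => by rw [mu_extends, ENNReal.toReal_ofReal (by positivity)]

/-- The length of the string coded by a number. -/
def codeLength (x : ℕ) : ℕ := ((Encodable.decode (α := List Bool) x).getD []).length

theorem primrec_codeLength : Primrec codeLength :=
  Primrec.list_length.comp (Primrec.option_getD.comp Primrec.decode (Primrec.const []))

theorem hasSum_weight_strCodes {V : Set (List Bool)} (hV : IsPrefixFree V) :
    HasSum ((strCodes V).indicator (weight codeLength)) (muR (cyl V)) := by
  have hinj : Function.Injective fun σ : V => Encodable.encode σ.1 :=
    Encodable.encode_injective.comp Subtype.val_injective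
  have hsupp : ∀ x ∉ Set.range fun σ : V => Encodable.encode σ.1,
      (strCodes V).indicator (weight codeLength) x = 0 := by
    refine fun x hx => Set.indicator_of_notMem ?_ _
    rintro ⟨σ, hσ, rfl⟩
    exact hx ⟨⟨σ, hσ⟩, rfl⟩
  refine (hinj.hasSum_iff hsupp).1 ((hasSum_muR_cyl hV).congr_fun fun σ => ?_)
  have hσ : Encodable.encode σ.1 ∈ strCodes V := ⟨σ.1, σ.2, rfl⟩
  simp [hσ, weight, codeLength]

theorem SigmaStr.ceStrIn {n : ℕ} {S : Set (List Bool)} (hS : SigmaStr (n + 1) S) :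
    CeStrIn (iterJump n) S := by
  obtain ⟨c, hc⟩ := hS
  rw [CeStrIn, hc]
  exact ceIn_sigmaNumIdx n c

theorem no_random_subset_measure_general {O : ℕ → ℕ} {S V : Set (List Bool)}
    (hS : CeStrIn O S) (hfree : IsPrefixFree S) (hVS : V ⊆ S) (hV : CeStrIn (jump O) V) :
    ¬ MLRandomIn (jump O) (muR (cyl V)) := by
  have hsub : strCodes V ⊆ strCodes S := fun _ ⟨σ, hσ, h⟩ => ⟨σ, hVS hσ, h⟩
  rw [← (hasSum_weight_strCodes (hfree.mono hVS)).tsum_eq]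
  exact not_mlRandomIn_tsum_weight primrec_codeLength hsub hS hV
    (hasSum_weight_strCodes hfree).summable

/-- **No random measures of simple subsets of prefix-free sets.**
No c.e. prefix-free set of strings contains a `Σ^0_1(∅')` subset of 2-random measure;
more generally, for each `n`, no `Σ^0_{n+1}` prefix-free set of strings contains a
`Σ^0_{n+2}` subset whose measure is an `(n+2)`-random real. -/
theorem no_random_subset_measure :
    (∀ S : Set (List Bool), SigmaStr 1 S → IsPrefixFree S →
      ∀ V : Set (List Bool), V ⊆ S → CeStrIn (iterJump 1) V →
        ¬ NRandom 2 (muR (cyl V))) ∧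
    (∀ (n : ℕ) (S : Set (List Bool)), SigmaStr (n + 1) S → IsPrefixFree S →
      ∀ V : Set (List Bool), V ⊆ S → SigmaStr (n + 2) V →
        ¬ NRandom (n + 2) (muR (cyl V))) := by
  constructor
  · intro S hS hfree V hVS hV
    exact no_random_subset_measure_general (O := iterJump 0) hS.ceStrIn hfree hVS hV
  · intro n S hS hfree V hVS hV
    exact no_random_subset_measure_general (O := iterJump n) hS.ceStrIn hfree hVS hV.ceStrIn

end RandProb
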